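/- arXiv:1811.02525 — 8 statements merged into one kernel-verified Lean document; each statement's English description precedes it below -/
import Mathlib

section
/- In the setting of stochastic gradient descent with uniform sampling (θ_{t+1}(i₁,…,i_t) a Euclidean projection of θ_t − α_t ∇f_{i_t}(θ_t) onto Θ, θ₁ ∈ Θ), assume additionally: the step sizes are α_t = 1/√t; the feasible set Θ has bounded diameter in sup norm, ‖θ − θ'‖_∞ ≤ D for all θ, θ' ∈ Θ; and the gradients are bounded, ‖∇f_i(θ)‖_∞ ≤ G for all i ∈ {1,…,n} and θ ∈ Θ. Then for every θ* ∈ Θ, the expected regret satisfies Σ_{t=1}^T E[ f(θ_t) − f(θ*) ] ≤ d G² (√T − 1/2) + (d D²/2) √T, where f = (1/n) Σ_i f_i. -/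
/-!
Projection onto a convex set brings a point no farther from any point `z` of that set, so expanding
`‖x - α • g - z‖ ^ 2` bounds the loss `⟪g, x - z⟫` of one step by the decrease of `‖· - z‖ ^ 2`
divided by `2 * α`, plus `α / 2 * ‖g‖ ^ 2`. Averaging over the index of the step turns `⟪g, x - z⟫`
into a bound for the expected regret. Summed over time, the decreases telescope up to the increments
of `1 / (2 * α)`, which are nonnegative for non-increasing steps and so cost only the squared radius
times the last weight; for `α = 1 / √t` the remaining term is controlled by
`∑ 1 / √t ≤ 2 * √T - 1`.
-/

open scoped BigOperators InnerProductSpace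

section Sums

lemma expect_eq_expect_expect_snoc {ι M : Type*} [Fintype ι] [AddCommMonoid M] [Module ℚ≥0 M]
    (t : ℕ) (F : (Fin (t + 1) → ι) → M) :
    𝔼 s, F s = 𝔼 s : Fin t → ι, 𝔼 i, F (Fin.snoc s i) := by
  rw [← Fintype.expect_equiv (Fin.snocEquiv fun _ : Fin (t + 1) => ι) _ F fun _ => rfl,
    ← Finset.univ_product_univ, Finset.expect_product, Finset.expect_comm]
  rfl

lemma sum_range_succ_mul_sub_le {R : Type*} [CommRing R] [LinearOrder R] [IsStrictOrderedRing R]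
    {w e : ℕ → R} {B : R} (hw : Monotone w) (hw₀ : 0 ≤ w 0) (he : ∀ t, e t ≤ B) (m : ℕ) :
    ∑ t ∈ Finset.range (m + 1), w t * (e t - e (t + 1)) ≤ w m * (B - e (m + 1)) := by
  induction m with
  | zero => simpa using mul_le_mul_of_nonneg_left (sub_le_sub_right (he 0) (e 1)) hw₀
  | succ m ih =>
    have hgap : 0 ≤ (w (m + 1) - w m) * (B - e (m + 1)) :=
      mul_nonneg (sub_nonneg.2 (hw m.le_succ)) (sub_nonneg.2 (he _))
    rw [Finset.sum_range_succ]
    linarith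

lemma one_div_sqrt_add_one_le {x : ℝ} (hx : 0 ≤ x) : 1 / √(x + 1) ≤ 2 * (√(x + 1) - √x) := by
  have hpos : 0 < √(x + 1) := Real.sqrt_pos.2 (by positivity)
  rw [div_le_iff₀ hpos]
  nlinarith [sq_nonneg (√(x + 1) - √x), Real.sq_sqrt hx, Real.sq_sqrt (add_nonneg hx zero_le_one)]

lemma sum_range_succ_one_div_sqrt_le (m : ℕ) :
    ∑ t ∈ Finset.range (m + 1), 1 / √((t : ℝ) + 1) ≤ 2 * √((m : ℝ) + 1) - 1 := by
  induction m with
  | zero => norm_num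
  | succ m ih =>
    have hstep := one_div_sqrt_add_one_le (m + 1 : ℕ).cast_nonneg'
    rw [Finset.sum_range_succ]
    push_cast at hstep ⊢
    linarith

end Sums

lemma norm_le_sqrt_card_mul {ι 𝕜 : Type*} [Fintype ι] [RCLike 𝕜] {x : EuclideanSpace 𝕜 ι}
    {B : ℝ} (hx : ∀ i, ‖x i‖ ≤ B) : ‖x‖ ≤ √(Fintype.card ι) * B := by
  obtain hι | ⟨⟨i⟩⟩ := isEmpty_or_nonempty ι
  · simp [Subsingleton.elim x 0]
  · have hB : 0 ≤ B := (norm_nonneg _).trans (hx i)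
    calc ‖x‖ = √(∑ i, ‖x i‖ ^ 2) := EuclideanSpace.norm_eq x
      _ ≤ √(∑ _i : ι, B ^ 2) := by gcongr with i; exact hx i
      _ = √(Fintype.card ι) * B := by simp [Real.sqrt_sq hB]

lemma add_fderiv_le_of_convexOn {E : Type*} [NormedAddCommGroup E] [NormedSpace ℝ E] {s : Set E}
    {f : E → ℝ} {f' : E →L[ℝ] ℝ} {x y : E} (hf : ConvexOn ℝ s f) (hx : x ∈ s) (hy : y ∈ s)
    (hf' : HasFDerivAt f f' x) : f x + f' (y - x) ≤ f y := by
  have hderiv : HasDerivAt (f ∘ AffineMap.lineMap (k := ℝ) x y) (f' (y - x)) 0 := by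
    rw [← AffineMap.lineMap_apply_zero (k := ℝ) x y] at hf'
    exact hf'.comp_hasDerivAt 0 AffineMap.hasDerivAt_lineMap
  have hslope := (hf.comp_affineMap (AffineMap.lineMap x y)).le_slope_of_hasDerivAt
    (by simpa using hx) (by simpa using hy) one_pos hderiv
  simp only [slope_def_field, Function.comp_apply, AffineMap.lineMap_apply_one,
    AffineMap.lineMap_apply_zero, sub_zero, div_one] at hslope
  linarith

lemma sub_le_inner_gradient_of_convexOn {E : Type*} [NormedAddCommGroup E]
    [InnerProductSpace ℝ E] [CompleteSpace E] {s : Set E} {f : E → ℝ} {x y : E}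
    (hf : ConvexOn ℝ s f) (hx : x ∈ s) (hy : y ∈ s) (hd : DifferentiableAt ℝ f x) :
    f x - f y ≤ ⟪gradient f x, x - y⟫_ℝ := by
  have h := add_fderiv_le_of_convexOn hf hx hy hd.hasGradientAt.hasFDerivAt
  rw [InnerProductSpace.toDual_apply_apply, ← neg_sub x y, inner_neg_right] at h
  linarith

section ProjectedStep

variable {E : Type*} [NormedAddCommGroup E] [InnerProductSpace ℝ E]

lemma norm_sub_le_of_nearest {s : Set E} (hs : Convex ℝ s) {x p z : E} (hp : p ∈ s)
    (hz : z ∈ s) (hmin : ∀ u ∈ s, ‖p - x‖ ≤ ‖u - x‖) : ‖p - z‖ ≤ ‖x - z‖ := by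
  have : Nonempty s := ⟨⟨p, hp⟩⟩
  have hinf : ‖x - p‖ = ⨅ u : s, ‖x - u‖ := by
    refine le_antisymm (le_ciInf fun u => ?_)
      (ciInf_le ⟨0, Set.forall_mem_range.2 fun _ => norm_nonneg _⟩ (⟨p, hp⟩ : s))
    simpa only [norm_sub_rev] using hmin u u.2
  have hangle := (norm_eq_iInf_iff_real_inner_le_zero hs hp).1 hinf z hz
  refine le_of_sq_le_sq ?_ (norm_nonneg _)
  have hexpand : ‖x - z‖ ^ 2 = ‖x - p‖ ^ 2 - 2 * ⟪x - p, z - p⟫_ℝ + ‖p - z‖ ^ 2 := by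
    rw [norm_sub_rev p z, ← norm_sub_sq_real, sub_sub_sub_cancel_right]
  linarith [sq_nonneg ‖x - p‖]

lemma inner_le_of_norm_sub_le {x g p z : E} {α : ℝ} (hα : 0 < α)
    (hp : ‖p - z‖ ≤ ‖x - α • g - z‖) :
    ⟪g, x - z⟫_ℝ ≤ (2 * α)⁻¹ * (‖x - z‖ ^ 2 - ‖p - z‖ ^ 2) + α / 2 * ‖g‖ ^ 2 := by
  have hsq : ‖p - z‖ ^ 2 ≤ ‖x - z‖ ^ 2 - 2 * α * ⟪g, x - z⟫_ℝ + α ^ 2 * ‖g‖ ^ 2 := by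
    calc ‖p - z‖ ^ 2 ≤ ‖x - α • g - z‖ ^ 2 := by gcongr
      _ = ‖(x - z) - α • g‖ ^ 2 := by rw [sub_right_comm]
      _ = _ := by
        rw [norm_sub_sq_real, inner_smul_right, real_inner_comm, norm_smul, mul_pow,
          Real.norm_eq_abs, sq_abs, mul_assoc]
  calc ⟪g, x - z⟫_ℝ = (2 * α)⁻¹ * (2 * α * ⟪g, x - z⟫_ℝ) := by field_simp
    _ ≤ (2 * α)⁻¹ * (‖x - z‖ ^ 2 - ‖p - z‖ ^ 2 + α ^ 2 * ‖g‖ ^ 2) := by gcongr; linarith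
    _ = _ := by field_simp

end ProjectedStep

section StochasticGradientDescent

variable {E ι : Type*} [NormedAddCommGroup E] [InnerProductSpace ℝ E]

/-- The iterates of projected stochastic (sub)gradient descent on `Θ` with step sizes `α` and
search directions `g i`. The iterate after `t` steps is `θ t s`, where `s` lists the `t` sampled
indices. Each new iterate is required to be some nearest point of `Θ`, so that no assumption
ensuring the existence of projections is built in. -/
structure IsProjectedSGD (Θ : Set E) (α : ℕ → ℝ) (g : ι → E → E)
    (θ : (t : ℕ) → (Fin t → ι) → E) : Prop where
  mem : ∀ t s, θ t s ∈ Θ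
  nearest : ∀ t s i, ∀ u ∈ Θ, ‖θ (t + 1) (Fin.snoc s i) - (θ t s - α t • g i (θ t s))‖ ≤
    ‖u - (θ t s - α t • g i (θ t s))‖

variable {Θ : Set E} {α : ℕ → ℝ} {f : ι → E → ℝ} {g : ι → E → E}
  {θ : (t : ℕ) → (Fin t → ι) → E} {z : E} {L R : ℝ}

namespace IsProjectedSGD

lemma step_regret_le (h : IsProjectedSGD Θ α g θ) (hΘ : Convex ℝ Θ) (hz : z ∈ Θ)
    (hsub : ∀ i, ∀ x ∈ Θ, f i x - f i z ≤ ⟪g i x, x - z⟫_ℝ) (hL : ∀ i, ∀ x ∈ Θ, ‖g i x‖ ≤ L)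
    {t : ℕ} (hα : 0 < α t) (s : Fin t → ι) (i : ι) :
    f i (θ t s) - f i z ≤
      (2 * α t)⁻¹ * (‖θ t s - z‖ ^ 2 - ‖θ (t + 1) (Fin.snoc s i) - z‖ ^ 2) + α t / 2 * L ^ 2 :=
  calc f i (θ t s) - f i z ≤ ⟪g i (θ t s), θ t s - z⟫_ℝ := hsub i _ (h.mem t s)
    _ ≤ _ := inner_le_of_norm_sub_le hα
      (norm_sub_le_of_nearest hΘ (h.mem _ _) hz (h.nearest t s i))
    _ ≤ _ := by gcongr; exact hL i _ (h.mem t s)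

variable [Fintype ι] [Nonempty ι]

lemma expect_step_regret_le (h : IsProjectedSGD Θ α g θ) (hΘ : Convex ℝ Θ) (hz : z ∈ Θ)
    (hsub : ∀ i, ∀ x ∈ Θ, f i x - f i z ≤ ⟪g i x, x - z⟫_ℝ) (hL : ∀ i, ∀ x ∈ Θ, ‖g i x‖ ≤ L)
    {t : ℕ} (hα : 0 < α t) :
    𝔼 s, 𝔼 i, (f i (θ t s) - f i z) ≤
      (2 * α t)⁻¹ * (𝔼 s, ‖θ t s - z‖ ^ 2 - 𝔼 s, ‖θ (t + 1) s - z‖ ^ 2) + α t / 2 * L ^ 2 :=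
  calc 𝔼 s, 𝔼 i, (f i (θ t s) - f i z)
      ≤ 𝔼 s, 𝔼 i, ((2 * α t)⁻¹ * (‖θ t s - z‖ ^ 2 - ‖θ (t + 1) (Fin.snoc s i) - z‖ ^ 2) +
          α t / 2 * L ^ 2) :=
        Finset.expect_le_expect fun s _ => Finset.expect_le_expect fun i _ =>
          h.step_regret_le hΘ hz hsub hL hα s i
    _ = _ := by
        rw [expect_eq_expect_expect_snoc t]
        simp only [Finset.expect_add_distrib, Finset.expect_sub_distrib, ← Finset.mul_expect,
          Fintype.expect_const]

theorem sum_expect_regret_le (h : IsProjectedSGD Θ α g θ) (hΘ : Convex ℝ Θ) (hz : z ∈ Θ)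
    (hsub : ∀ i, ∀ x ∈ Θ, f i x - f i z ≤ ⟪g i x, x - z⟫_ℝ) (hL : ∀ i, ∀ x ∈ Θ, ‖g i x‖ ≤ L)
    (hR : ∀ x ∈ Θ, ‖x - z‖ ≤ R) (hα : ∀ t, 0 < α t) (hα_anti : Antitone α) (m : ℕ) :
    ∑ t ∈ Finset.range (m + 1), 𝔼 s, 𝔼 i, (f i (θ t s) - f i z) ≤
      (2 * α m)⁻¹ * R ^ 2 + (∑ t ∈ Finset.range (m + 1), α t) / 2 * L ^ 2 := by
  set e : ℕ → ℝ := fun t => 𝔼 s, ‖θ t s - z‖ ^ 2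
  have he_nonneg : 0 ≤ e (m + 1) := Finset.expect_nonneg fun _ _ => sq_nonneg _
  have he_le (t : ℕ) : e t ≤ R ^ 2 := Finset.expect_le Finset.univ_nonempty fun s _ =>
    pow_le_pow_left₀ (norm_nonneg _) (hR _ (h.mem t s)) 2
  have hw (t : ℕ) : 0 ≤ (2 * α t)⁻¹ := inv_nonneg.2 (mul_pos two_pos (hα t)).le
  have hw_mono : Monotone fun t => (2 * α t)⁻¹ := fun a b hab =>
    inv_anti₀ (mul_pos two_pos (hα b)) (mul_le_mul_of_nonneg_left (hα_anti hab) zero_le_two)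
  calc _ ≤ ∑ t ∈ Finset.range (m + 1), ((2 * α t)⁻¹ * (e t - e (t + 1)) + α t / 2 * L ^ 2) :=
        Finset.sum_le_sum fun t _ => h.expect_step_regret_le hΘ hz hsub hL (hα t)
    _ = ∑ t ∈ Finset.range (m + 1), (2 * α t)⁻¹ * (e t - e (t + 1)) +
          (∑ t ∈ Finset.range (m + 1), α t) / 2 * L ^ 2 := by
        rw [Finset.sum_add_distrib, ← Finset.sum_mul, ← Finset.sum_div]
    _ ≤ (2 * α m)⁻¹ * (R ^ 2 - e (m + 1)) + (∑ t ∈ Finset.range (m + 1), α t) / 2 * L ^ 2 := by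
        gcongr
        exact sum_range_succ_mul_sub_le hw_mono (hw 0) he_le m
    _ ≤ _ := by
        gcongr
        · exact hw m
        · exact sub_le_self _ he_nonneg

end IsProjectedSGD

theorem stmt_4_general [Fintype ι] [Nonempty ι] {T : ℕ} (hT : 1 ≤ T) (hΘ : Convex ℝ Θ)
    (h : IsProjectedSGD Θ (fun t => 1 / √((t : ℝ) + 1)) g θ) (hz : z ∈ Θ)
    (hsub : ∀ i, ∀ x ∈ Θ, f i x - f i z ≤ ⟪g i x, x - z⟫_ℝ) (hL : ∀ i, ∀ x ∈ Θ, ‖g i x‖ ≤ L)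
    (hR : ∀ x ∈ Θ, ‖x - z‖ ≤ R) :
    ∑ t ∈ Finset.range T, 𝔼 s, (𝔼 i, f i (θ t s) - 𝔼 i, f i z) ≤
      L ^ 2 * (√T - 1 / 2) + R ^ 2 / 2 * √T := by
  obtain ⟨m, rfl⟩ := Nat.exists_eq_add_of_le' hT
  have hanti : Antitone fun t : ℕ => 1 / √((t : ℝ) + 1) := fun a b hab => by
    dsimp only
    gcongr
  simp only [← Finset.expect_sub_distrib]
  calc _ ≤ (2 * (1 / √((m : ℝ) + 1)))⁻¹ * R ^ 2 +
          (∑ t ∈ Finset.range (m + 1), 1 / √((t : ℝ) + 1)) / 2 * L ^ 2 :=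
        h.sum_expect_regret_le hΘ hz hsub hL hR (fun t => by positivity) hanti m
    _ ≤ (2 * (1 / √((m : ℝ) + 1)))⁻¹ * R ^ 2 + (2 * √((m : ℝ) + 1) - 1) / 2 * L ^ 2 := by
        gcongr
        exact sum_range_succ_one_div_sqrt_le m
    _ = _ := by
        push_cast
        field_simp
        ring

end StochasticGradientDescent

/-- Corollary 1.1 of the paper: expected regret bound for SGD with uniform
sampling, step sizes `α_t = 1/√t`, sup-norm diameter `D` of `Θ` and sup-norm gradient bound `G`:
`Σ_{t=1}^T E[f(θ_t) − f(θ*)] ≤ d G² (√T − 1/2) + (d D²/2) √T`. -/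
theorem stmt_4 (d n : ℕ) (hn : 0 < n) (T : ℕ) (hT : 1 ≤ T)
    (Θ : Set (EuclideanSpace ℝ (Fin d))) (hΘconv : Convex ℝ Θ)
    (f : Fin n → EuclideanSpace ℝ (Fin d) → ℝ)
    (hconv : ∀ i, ConvexOn ℝ Set.univ (f i))
    (hdiff : ∀ i, Differentiable ℝ (f i))
    (D G : ℝ)
    (hD : ∀ θ ∈ Θ, ∀ θ' ∈ Θ, ∀ h : Fin d, |θ h - θ' h| ≤ D)
    (hG : ∀ (i : Fin n), ∀ θ ∈ Θ, ∀ h : Fin d, |gradient (f i) θ h| ≤ G)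
    (θ₁ : EuclideanSpace ℝ (Fin d)) (hθ₁ : θ₁ ∈ Θ)
    (θpath : (t : ℕ) → (Fin t → Fin n) → EuclideanSpace ℝ (Fin d))
    (hinit : ∀ s : Fin 0 → Fin n, θpath 0 s = θ₁)
    (hmem : ∀ t s, θpath t s ∈ Θ)
    (hproj : ∀ (t : ℕ) (s : Fin t → Fin n) (i : Fin n), ∀ u ∈ Θ,
      ‖θpath (t + 1) (Fin.snoc s i) -
          (θpath t s - (1 / Real.sqrt (t + 1)) • gradient (f i) (θpath t s))‖ ≤
        ‖u - (θpath t s - (1 / Real.sqrt (t + 1)) • gradient (f i) (θpath t s))‖)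
    (θstar : EuclideanSpace ℝ (Fin d)) (hθstar : θstar ∈ Θ) :
    ∑ k ∈ Finset.range T, ((1 : ℝ) / (n : ℝ) ^ k) *
        ∑ s : Fin k → Fin n,
          ((1 / (n : ℝ)) * ∑ i, f i (θpath k s) - (1 / (n : ℝ)) * ∑ i, f i θstar) ≤
      (d : ℝ) * G ^ 2 * (Real.sqrt T - 1 / 2) + ((d : ℝ) * D ^ 2 / 2) * Real.sqrt T := by
  have : Nonempty (Fin n) := Fin.pos_iff_nonempty.1 hn
  simpa only [Fintype.expect_eq_sum_div_card, Fintype.card_fun, Fintype.card_fin, Nat.cast_pow,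
    one_div_mul_eq_div, mul_pow, Real.sq_sqrt (Nat.cast_nonneg d)] using
    stmt_4_general (g := fun i => gradient (f i)) hT hΘconv ⟨hmem, hproj⟩ hθstar
      (fun i x _ => sub_le_inner_gradient_of_convexOn (hconv i) trivial trivial (hdiff i x))
      (fun i x hx => norm_le_sqrt_card_mul (hG i x hx))
      (fun x hx => norm_le_sqrt_card_mul (hD x hx θstar hθstar))
end

section
/- Let Θ ⊆ ℝ^d be convex, f₁, …, f_n : ℝ^d → ℝ convex and differentiable, θ, θ* ∈ Θ, α > 0, and let p ∈ ℝ^n be a probability vector with p_i > 0 and Σ_i p_i = 1, with importance weights w_i = 1/(n p_i). For each i let θ'_i ∈ Θ be a Euclidean projection of θ − α w_i ∇f_i(θ) onto Θ. Then, with f = (1/n) Σ_i f_i: f(θ) − f(θ*) ≤ (α/2) Σ_{i=1}^n p_i w_i² ‖∇f_i(θ)‖₂² + (1/(2α)) ( ‖θ − θ*‖₂² − Σ_{i=1}^n p_i ‖θ'_i − θ*‖₂² ). -/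
/-!
The first-order inequality bounds `f_i(θ) - f_i(θ*)` by `⟪∇f_i(θ), θ - θ*⟫`, which is the cross term
in the expansion of `‖θ - α w_i ∇f_i(θ) - θ*‖²`. Projecting onto `Θ` does not increase the distance
to `θ* ∈ Θ`, so this square dominates `‖θ'_i - θ*‖²`. Averaging over `p` gives the claim, because
`p_i w_i = 1 / n`.
-/

open scoped RealInnerProductSpace

section Subgradient

variable {E : Type*} [NormedAddCommGroup E] [InnerProductSpace ℝ E]

/-- `g` is a subgradient of `f` at `x` relative to `s`: the affine function with slope `g` through
`(x, f x)` minorizes `f` on `s`. This is the first-order information about `f` that a projected step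
uses. The base point `x` may lie outside `s`. -/
def IsSubgradientOn (f : E → ℝ) (s : Set E) (g x : E) : Prop :=
  ∀ y ∈ s, f x + ⟪g, y - x⟫ ≤ f y

theorem IsSubgradientOn.mono {f : E → ℝ} {s t : Set E} {g x : E} (h : IsSubgradientOn f t g x)
    (hst : s ⊆ t) : IsSubgradientOn f s g x :=
  fun y hy ↦ h y (hst hy)

theorem isSubgradientOn_of_hasGradientWithinAt [CompleteSpace E] {f : E → ℝ} {s : Set E} {g x : E}
    (hf : ConvexOn ℝ s f) (hx : x ∈ s) (hg : HasGradientWithinAt f g s x) :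
    IsSubgradientOn f s g x := by
  intro y hy
  let line : ℝ →ᵃ[ℝ] E := AffineMap.lineMap x y
  have line_zero : line 0 = x := AffineMap.lineMap_apply_zero x y
  have line_one : line 1 = y := AffineMap.lineMap_apply_one x y
  have hderiv : HasDerivWithinAt (f ∘ line) ⟪g, y - x⟫ (line ⁻¹' s) 0 :=
    HasFDerivWithinAt.comp_hasDerivWithinAt_of_eq 0 hg.hasFDerivWithinAt
      AffineMap.hasDerivWithinAt_lineMap (Set.mapsTo_preimage line s) line_zero.symm
  have hslope : ⟪g, y - x⟫ ≤ slope (f ∘ line) 0 1 :=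
    (hf.comp_affineMap line).le_slope_of_hasDerivWithinAt
      (by rwa [Set.mem_preimage, line_zero]) (by rwa [Set.mem_preimage, line_one]) one_pos hderiv
  rw [slope_def_field, Function.comp_apply, Function.comp_apply, line_zero, line_one, sub_zero,
    div_one] at hslope
  linarith

end Subgradient

section Projection

variable {E : Type*} [NormedAddCommGroup E] [InnerProductSpace ℝ E] {K : Set E} {u v z : E}

theorem inner_sub_sub_nonpos_of_isMinOn_norm_sub (hK : Convex ℝ K) (hv : v ∈ K)
    (hmin : IsMinOn (fun y ↦ ‖y - z‖) K v) (hu : u ∈ K) : ⟪z - v, u - v⟫ ≤ 0 := by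
  have : Nonempty K := ⟨⟨v, hv⟩⟩
  have hdist : ‖z - v‖ = ⨅ y : K, ‖z - y‖ := by
    simp only [norm_sub_rev z]
    exact (hmin.iInf_eq hv).symm
  exact (norm_eq_iInf_iff_real_inner_le_zero hK hv).1 hdist u hu

theorem norm_sub_le_norm_sub_of_isMinOn_norm_sub (hK : Convex ℝ K) (hv : v ∈ K)
    (hmin : IsMinOn (fun y ↦ ‖y - z‖) K v) (hu : u ∈ K) : ‖v - u‖ ≤ ‖z - u‖ := by
  have hobtuse : ⟪z - v, u - v⟫ ≤ 0 := inner_sub_sub_nonpos_of_isMinOn_norm_sub hK hv hmin hu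
  have hexpand : ‖z - u‖ ^ 2 = ‖z - v‖ ^ 2 - 2 * ⟪z - v, u - v⟫ + ‖v - u‖ ^ 2 := by
    rw [← sub_sub_sub_cancel_right z u v, norm_sub_sq_real, norm_sub_rev u v]
  rw [← sq_le_sq₀ (norm_nonneg _) (norm_nonneg _)]
  linarith [sq_nonneg ‖z - v‖]

end Projection

section ProjectedStep

variable {E : Type*} [NormedAddCommGroup E] [InnerProductSpace ℝ E] {Θ : Set E}

theorem IsSubgradientOn.two_mul_sub_le_of_isMinOn {f : E → ℝ} {g θ θ' u : E} {η : ℝ}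
    (hg : IsSubgradientOn f Θ g θ) (hΘ : Convex ℝ Θ) (hη : 0 ≤ η) (hθ' : θ' ∈ Θ)
    (hmin : IsMinOn (fun y ↦ ‖y - (θ - η • g)‖) Θ θ') (hu : u ∈ Θ) :
    2 * η * (f θ - f u) ≤ η ^ 2 * ‖g‖ ^ 2 + (‖θ - u‖ ^ 2 - ‖θ' - u‖ ^ 2) := by
  have hsub : f θ - f u ≤ ⟪g, θ - u⟫ := by
    have := hg u hu
    rw [← neg_sub, inner_neg_right] at this
    linarith
  have hproj : ‖θ' - u‖ ^ 2 ≤ ‖θ - η • g - u‖ ^ 2 := by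
    gcongr
    exact norm_sub_le_norm_sub_of_isMinOn_norm_sub hΘ hθ' hmin hu
  have hexpand : ‖θ - η • g - u‖ ^ 2 = ‖θ - u‖ ^ 2 - 2 * η * ⟪g, θ - u⟫ + η ^ 2 * ‖g‖ ^ 2 := by
    rw [sub_right_comm, norm_sub_sq_real, inner_smul_right, real_inner_comm, norm_smul, mul_pow,
      Real.norm_eq_abs, sq_abs, mul_assoc]
  have hscaled : 2 * η * (f θ - f u) ≤ 2 * η * ⟪g, θ - u⟫ := by gcongr
  linarith

variable {ι : Type*} [Fintype ι] {f : ι → E → ℝ} {g θ' : ι → E} {θ θstar : E} {α : ℝ} {p w : ι → ℝ}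

theorem sum_mul_sub_le_of_isSubgradientOn (hΘ : Convex ℝ Θ)
    (hg : ∀ i, IsSubgradientOn (f i) Θ (g i) θ) (hθstar : θstar ∈ Θ) (hα : 0 < α)
    (hp : ∀ i, 0 ≤ p i) (hpsum : ∑ i, p i = 1) (hw : ∀ i, 0 ≤ w i) (hθ' : ∀ i, θ' i ∈ Θ)
    (hmin : ∀ i, IsMinOn (fun y ↦ ‖y - (θ - (α * w i) • g i)‖) Θ (θ' i)) :
    ∑ i, p i * w i * (f i θ - f i θstar) ≤
      (α / 2) * (∑ i, p i * w i ^ 2 * ‖g i‖ ^ 2) +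
      (1 / (2 * α)) * (‖θ - θstar‖ ^ 2 - ∑ i, p i * ‖θ' i - θstar‖ ^ 2) := by
  have hstep (i : ι) : p i * w i * (f i θ - f i θstar) ≤
      (α / 2) * (p i * w i ^ 2 * ‖g i‖ ^ 2) +
      (1 / (2 * α)) * (p i * ‖θ - θstar‖ ^ 2 - p i * ‖θ' i - θstar‖ ^ 2) := by
    calc p i * w i * (f i θ - f i θstar)
        = p i / (2 * α) * (2 * (α * w i) * (f i θ - f i θstar)) := by field_simp
      _ ≤ p i / (2 * α) * ((α * w i) ^ 2 * ‖g i‖ ^ 2 +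
            (‖θ - θstar‖ ^ 2 - ‖θ' i - θstar‖ ^ 2)) := by
          refine mul_le_mul_of_nonneg_left ?_ (div_nonneg (hp i) (by positivity))
          exact (hg i).two_mul_sub_le_of_isMinOn hΘ (mul_nonneg hα.le (hw i)) (hθ' i) (hmin i)
            hθstar
      _ = _ := by field_simp
  calc ∑ i, p i * w i * (f i θ - f i θstar)
      ≤ ∑ i, ((α / 2) * (p i * w i ^ 2 * ‖g i‖ ^ 2) +
          (1 / (2 * α)) * (p i * ‖θ - θstar‖ ^ 2 - p i * ‖θ' i - θstar‖ ^ 2)) :=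
        Finset.sum_le_sum fun i _ ↦ hstep i
    _ = _ := by
        rw [Finset.sum_add_distrib, ← Finset.mul_sum, ← Finset.mul_sum, Finset.sum_sub_distrib,
          ← Finset.sum_mul, hpsum, one_mul]

theorem stmt_5_general (hΘ : Convex ℝ Θ) (hg : ∀ i, IsSubgradientOn (f i) Θ (g i) θ)
    (hθstar : θstar ∈ Θ) (hα : 0 < α) (hp : ∀ i, 0 < p i) (hpsum : ∑ i, p i = 1)
    (hw : ∀ i, w i = 1 / ((Fintype.card ι : ℝ) * p i)) (hθ' : ∀ i, θ' i ∈ Θ)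
    (hmin : ∀ i, IsMinOn (fun y ↦ ‖y - (θ - (α * w i) • g i)‖) Θ (θ' i)) :
    (1 / (Fintype.card ι : ℝ)) * ∑ i, f i θ - (1 / (Fintype.card ι : ℝ)) * ∑ i, f i θstar ≤
      (α / 2) * (∑ i, p i * w i ^ 2 * ‖g i‖ ^ 2) +
      (1 / (2 * α)) * (‖θ - θstar‖ ^ 2 - ∑ i, p i * ‖θ' i - θstar‖ ^ 2) := by
  have hpw (i : ι) : p i * w i = 1 / (Fintype.card ι : ℝ) := by
    have := (hp i).ne'
    rw [hw]
    field_simp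
  have hw_nonneg (i : ι) : 0 ≤ w i := by
    have := hp i
    rw [hw]
    positivity
  have hsum := sum_mul_sub_le_of_isSubgradientOn hΘ hg hθstar hα (fun i ↦ (hp i).le) hpsum
    hw_nonneg hθ' hmin
  simpa only [hpw, ← Finset.mul_sum, Finset.sum_sub_distrib, mul_sub] using hsum

end ProjectedStep

/-- per-step inequality for adaptive-probabilities SGD.  With a probability
vector `p` (all entries positive, summing to 1), importance weights `w_i = 1/(n p_i)`, and
`θ'_i ∈ Θ` a Euclidean projection of `θ − α w_i ∇f_i(θ)` onto `Θ`, one has, for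
`f = (1/n) Σ_i f_i`:
`f(θ) − f(θ*) ≤ (α/2) Σ_i p_i w_i² ‖∇f_i(θ)‖² + (1/(2α))(‖θ−θ*‖² − Σ_i p_i ‖θ'_i−θ*‖²)`. -/
theorem stmt_5 (d n : ℕ) (hn : 0 < n)
    (Θ : Set (EuclideanSpace ℝ (Fin d))) (hΘconv : Convex ℝ Θ)
    (f : Fin n → EuclideanSpace ℝ (Fin d) → ℝ)
    (hconv : ∀ i, ConvexOn ℝ Set.univ (f i))
    (hdiff : ∀ i, Differentiable ℝ (f i))
    (θ θstar : EuclideanSpace ℝ (Fin d)) (hθ : θ ∈ Θ) (hθstar : θstar ∈ Θ)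
    (α : ℝ) (hα : 0 < α)
    (p : Fin n → ℝ) (hp : ∀ i, 0 < p i) (hpsum : ∑ i, p i = 1)
    (w : Fin n → ℝ) (hw : ∀ i, w i = 1 / ((n : ℝ) * p i))
    (θ' : Fin n → EuclideanSpace ℝ (Fin d))
    (hmem : ∀ i, θ' i ∈ Θ)
    (hproj : ∀ i, ∀ u ∈ Θ,
      ‖θ' i - (θ - (α * w i) • gradient (f i) θ)‖ ≤ ‖u - (θ - (α * w i) • gradient (f i) θ)‖) :
    (1 / (n : ℝ)) * ∑ i, f i θ - (1 / (n : ℝ)) * ∑ i, f i θstar ≤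
      (α / 2) * (∑ i, p i * (w i) ^ 2 * ‖gradient (f i) θ‖ ^ 2) +
      (1 / (2 * α)) * (‖θ - θstar‖ ^ 2 - ∑ i, p i * ‖θ' i - θstar‖ ^ 2) := by
  have hg (i : Fin n) : IsSubgradientOn (f i) Θ (gradient (f i) θ) θ :=
    (isSubgradientOn_of_hasGradientWithinAt (hconv i) (Set.mem_univ θ)
      (hasGradientWithinAt_univ.2 (hdiff i θ).hasGradientAt)).mono (Set.subset_univ Θ)
  simpa only [Fintype.card_fin] using stmt_5_general hΘconv hg hθstar hα hp hpsum
    (by simpa only [Fintype.card_fin] using hw) hmem fun i ↦ isMinOn_iff.2 (hproj i)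
end

section
/- Let T ≥ 1, let G ≥ 0, and for each t ∈ {1, …, T} let g_{t,1}, …, g_{t,n} ∈ ℝ^d be nonzero vectors with ‖g_{t,i}‖_∞ ≤ G for all i. Let p̂_{t,i} = ‖g_{t,i}‖₂ / Σ_j ‖g_{t,j}‖₂ be the optimal sampling probabilities with weights ŵ_{t,i} = 1/(n p̂_{t,i}), and let α_t = 1/√t. Then Σ_{t=1}^T (α_t/2) Σ_{i=1}^n p̂_{t,i} ŵ_{t,i}² ‖g_{t,i}‖₂² ≤ d G² (√T − 1/2) − Σ_{t=1}^T (α_t/2) Var_n(‖g_{t,i}‖₂), where Var_n(x) = (1/n) Σ_i (x_i − (1/n) Σ_j x_j)². -/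
/-!
Sampling with probabilities proportional to `x` makes the second moment of the importance-weighted
estimator equal to the squared mean of `x`, which is its mean square minus its variance. For
gradient norms the mean square is at most `d * G ^ 2`, uniformly in the iteration, and the step
sizes telescope: `1 / √(t + 1) ≤ 2 * (√(t + 1) - √t)`.
-/

section ImportanceSampling

open Finset
open scoped BigOperators

variable {ι K : Type*} [Fintype ι] [Field K]

/-- The sampling probabilities proportional to the sizes `x i`; for gradient norms these are the
optimal probabilities `p̂`. -/
def proportionalProb (x : ι → K) (i : ι) : K :=
  x i / ∑ j, x j

/-- The weights `ŵ i = 1 / (n p i)` that make sampling from `p` unbiased for the uniform mean over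
the `n` elements of `ι`. -/
def importanceWeight (p : ι → K) (i : ι) : K :=
  1 / ((Fintype.card ι : K) * p i)

/-- The second moment of the importance-weighted estimator that draws `i` with probability `p i`
and then reports a vector of norm `x i`, scaled by its weight. -/
def weightedSecondMoment (p x : ι → K) : K :=
  ∑ i, p i * importanceWeight p i ^ 2 * x i ^ 2

/-- The variance `Var_n` of `x` under the uniform distribution on `ι`, normalized by the
cardinality `n` of `ι` rather than by `n - 1`. -/
def uniformVariance [CharZero K] (x : ι → K) : K :=
  𝔼 i, (x i - 𝔼 j, x j) ^ 2

theorem uniformVariance_eq_expect_sq_sub_sq_expect [CharZero K] [Nonempty ι] (x : ι → K) :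
    uniformVariance x = 𝔼 i, x i ^ 2 - (𝔼 i, x i) ^ 2 := by
  simp only [uniformVariance, sub_sq, expect_add_distrib, expect_sub_distrib, ← expect_mul,
    ← mul_expect, Fintype.expect_const]
  ring

theorem uniformVariance_eq_one_div_card_mul_sum [CharZero K] (x : ι → K) :
    uniformVariance x = 1 / (Fintype.card ι : K) *
      ∑ i, (x i - 1 / (Fintype.card ι : K) * ∑ j, x j) ^ 2 := by
  simp only [uniformVariance, Fintype.expect_eq_sum_div_card, one_div_mul_eq_div]

variable [LinearOrder K] [IsStrictOrderedRing K]

theorem weightedSecondMoment_proportionalProb {x : ι → K} (hx : ∀ i, 0 < x i) :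
    weightedSecondMoment (proportionalProb x) x = (𝔼 i, x i) ^ 2 := by
  have summand_eq (i : ι) :
      proportionalProb x i * importanceWeight (proportionalProb x) i ^ 2 * x i ^ 2 =
        x i * ((∑ j, x j) / (Fintype.card ι : K) ^ 2) := by
    have : Nonempty ι := ⟨i⟩
    have hxi : x i ≠ 0 := (hx i).ne'
    have hsum : ∑ j, x j ≠ 0 := (sum_pos (fun j _ => hx j) univ_nonempty).ne'
    unfold importanceWeight proportionalProb
    field_simp
  rw [weightedSecondMoment, sum_congr rfl fun i _ => summand_eq i, ← sum_mul,
    Fintype.expect_eq_sum_div_card]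
  ring

theorem weightedSecondMoment_proportionalProb_eq_sub_uniformVariance [Nonempty ι] {x : ι → K}
    (hx : ∀ i, 0 < x i) :
    weightedSecondMoment (proportionalProb x) x = 𝔼 i, x i ^ 2 - uniformVariance x := by
  rw [weightedSecondMoment_proportionalProb hx, uniformVariance_eq_expect_sq_sub_sq_expect,
    sub_sub_cancel]

theorem weightedSecondMoment_proportionalProb_le_sub_uniformVariance [Nonempty ι] {x : ι → K}
    {C : K} (hx : ∀ i, 0 < x i) (hC : ∀ i, x i ^ 2 ≤ C) :
    weightedSecondMoment (proportionalProb x) x ≤ C - uniformVariance x := by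
  rw [weightedSecondMoment_proportionalProb_eq_sub_uniformVariance hx]
  exact sub_le_sub_right (expect_le univ_nonempty fun i _ => hC i) _

end ImportanceSampling

theorem piLp_two_norm_sq_le_card_mul_sq {ι : Type*} [Fintype ι] {β : ι → Type*}
    [∀ i, SeminormedAddCommGroup (β i)] {x : PiLp 2 β} {C : ℝ} (hx : ∀ i, ‖x i‖ ≤ C) :
    ‖x‖ ^ 2 ≤ Fintype.card ι * C ^ 2 :=
  calc ‖x‖ ^ 2 = ∑ i, ‖x i‖ ^ 2 := PiLp.norm_sq_eq_of_L2 β x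
    _ ≤ ∑ _i : ι, C ^ 2 := Finset.sum_le_sum fun i _ => pow_le_pow_left₀ (norm_nonneg _) (hx i) 2
    _ = Fintype.card ι * C ^ 2 := by
      rw [Finset.sum_const, Finset.card_univ, nsmul_eq_mul]

theorem sub_div_sqrt_le_two_mul_sqrt_sub_sqrt {x y : ℝ} (hx : 0 ≤ x) (hy : 0 < y) :
    (y - x) / √y ≤ 2 * (√y - √x) := by
  rw [div_le_iff₀ (Real.sqrt_pos.mpr hy)]
  linarith [sq_nonneg (√y - √x), Real.sq_sqrt hx, Real.sq_sqrt hy.le]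

theorem sum_Icc_one_div_sqrt_le {T : ℕ} (hT : 1 ≤ T) :
    ∑ t ∈ Finset.Icc 1 T, 1 / √(t : ℝ) ≤ 2 * √T - 1 := by
  induction T, hT using Nat.le_induction with
  | base => norm_num
  | succ k _ ih =>
    have increment : 1 / √(k + 1 : ℝ) ≤ 2 * (√(k + 1 : ℝ) - √k) := by
      simpa only [add_sub_cancel_left] using
        sub_div_sqrt_le_two_mul_sqrt_sub_sqrt k.cast_nonneg (Nat.cast_add_one_pos (α := ℝ) k)
    rw [Finset.sum_Icc_succ_top (by lia), Nat.cast_add_one]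
    linarith

/-- Lemma A.3 of the paper: total error bound for ap-SGD with optimal
probabilities `p̂_{t,i} = ‖g_{t,i}‖/Σ_j ‖g_{t,j}‖`, weights `ŵ_{t,i} = 1/(n p̂_{t,i})`, and
step sizes `α_t = 1/√t`, given the sup-norm gradient bound `G`:
`Σ_t (α_t/2) Σ_i p̂ ŵ² ‖g‖² ≤ d G² (√T − 1/2) − Σ_t (α_t/2) Var_n(‖g_{t,i}‖₂)`. -/
theorem stmt_10 (d n : ℕ) (hn : 0 < n) (T : ℕ) (hT : 1 ≤ T) (G : ℝ) (hG : 0 ≤ G)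
    (g : ℕ → Fin n → EuclideanSpace ℝ (Fin d))
    (hgne : ∀ t ∈ Finset.Icc 1 T, ∀ i, g t i ≠ 0)
    (hgb : ∀ t ∈ Finset.Icc 1 T, ∀ i, ∀ h : Fin d, |g t i h| ≤ G)
    (phat : ℕ → Fin n → ℝ)
    (hphat : ∀ t i, phat t i = ‖g t i‖ / ∑ j, ‖g t j‖)
    (what : ℕ → Fin n → ℝ)
    (hwhat : ∀ t i, what t i = 1 / ((n : ℝ) * phat t i)) :
    ∑ t ∈ Finset.Icc 1 T, ((1 / Real.sqrt t) / 2) *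
        ∑ i, phat t i * (what t i) ^ 2 * ‖g t i‖ ^ 2 ≤
      (d : ℝ) * G ^ 2 * (Real.sqrt T - 1 / 2) -
        ∑ t ∈ Finset.Icc 1 T, ((1 / Real.sqrt t) / 2) *
          ((1 / (n : ℝ)) * ∑ i, (‖g t i‖ - (1 / (n : ℝ)) * ∑ j, ‖g t j‖) ^ 2) := by
  have : Nonempty (Fin n) := ⟨⟨0, hn⟩⟩
  let x (t : ℕ) (i : Fin n) : ℝ := ‖g t i‖
  have second_moment_eq (t : ℕ) : ∑ i, phat t i * what t i ^ 2 * ‖g t i‖ ^ 2 =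
      weightedSecondMoment (proportionalProb (x t)) (x t) := by
    simp only [weightedSecondMoment, importanceWeight, proportionalProb, hwhat, hphat,
      Fintype.card_fin, x]
  have variance_eq (t : ℕ) : 1 / (n : ℝ) * ∑ i, (‖g t i‖ - 1 / (n : ℝ) * ∑ j, ‖g t j‖) ^ 2 =
      uniformVariance (x t) := by
    simp only [uniformVariance_eq_one_div_card_mul_sum, Fintype.card_fin, x]
  have sq_le : ∀ t ∈ Finset.Icc 1 T, ∀ i, x t i ^ 2 ≤ d * G ^ 2 := fun t ht i => by
    simpa only [Fintype.card_fin] using piLp_two_norm_sq_le_card_mul_sq (x := g t i) (hgb t ht i)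
  simp only [second_moment_eq, variance_eq]
  calc _ ≤ ∑ t ∈ Finset.Icc 1 T, 1 / √(t : ℝ) / 2 * (d * G ^ 2 - uniformVariance (x t)) := by
        gcongr with t ht
        exact weightedSecondMoment_proportionalProb_le_sub_uniformVariance
          (fun i => norm_pos_iff.mpr (hgne t ht i)) (sq_le t ht)
    _ = d * G ^ 2 * ((∑ t ∈ Finset.Icc 1 T, 1 / √(t : ℝ)) / 2) -
          ∑ t ∈ Finset.Icc 1 T, 1 / √(t : ℝ) / 2 * uniformVariance (x t) := by
        simp only [mul_sub, Finset.sum_sub_distrib, Finset.sum_div, Finset.mul_sum, mul_comm]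
    _ ≤ _ := by
        gcongr
        linarith [sum_Icc_one_div_sqrt_le hT]
end

section
/- Let Θ ⊆ ℝ^d be convex, f₁, …, f_n : ℝ^d → ℝ convex and differentiable, θ, θ* ∈ Θ, α > 0, 0 ≤ β₁ < 1, m' ∈ ℝ^d (the previous first-moment vector), and let p ∈ ℝ^n be a probability vector with p_i > 0, Σ p_i = 1, and weights w_i = 1/(n p_i). For each i let v̂_i ∈ ℝ^d have strictly positive entries, set m_i = β₁ m' + (1 − β₁) ∇f_i(θ), and let θ'_i ∈ Θ satisfy ‖v̂_i^{1/4} ⊙ (θ'_i − z_i)‖₂ ≤ ‖v̂_i^{1/4} ⊙ (u − z_i)‖₂ for all u ∈ Θ, where z_i = θ − α w_i (m_i / √(v̂_i)) (componentwise division). Then, with f = (1/n) Σ_i f_i: (1 − β₁)( f(θ) − f(θ*) ) ≤ (α/2) Σ_i p_i w_i² ‖v̂_i^{−1/4} ⊙ m_i‖₂² + (1/(2α)) Σ_i p_i ( ‖v̂_i^{1/4} ⊙ (θ − θ*)‖₂² − ‖v̂_i^{1/4} ⊙ (θ'_i − θ*)‖₂² ) + β₁ Σ_i p_i ( (α/2)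 ‖v̂_i^{−1/4} ⊙ m'‖₂² + (1/(2α)) ‖v̂_i^{1/4} ⊙ (θ − θ*)‖₂² ). -/
/-!
Let `D = diag (√s)` with `s = √v̂`. In the coordinates `D x` the update is a Euclidean projected
step, so the obtuse-angle property of projections bounds `⟪m i, θ - θ*⟫`, and multiplying by `p i`
turns the step size `α * w i` into the weight `q i = p i * w i` of `f i` in the objective.
Subgradient inequalities bound the `(1 - β)`-part of `⟪m i, θ - θ*⟫` from below. The momentum part
adds up to `β * ⟪m', θ - θ*⟫`, because both `p` and `q` sum to `1`, and Young's inequality for the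
pairing of `D⁻¹ m'` with `D (θ - θ*)` absorbs it.
-/

section ConvexFunction

theorem add_fderiv_sub_le_of_convexOn {E : Type*} [NormedAddCommGroup E] [NormedSpace ℝ E]
    {K : Set E} {f : E → ℝ} {f' : E →L[ℝ] ℝ} {x y : E} (hf : ConvexOn ℝ K f)
    (hx : x ∈ K) (hy : y ∈ K) (hf' : HasFDerivAt f f' x) :
    f x + f' (y - x) ≤ f y := by
  let line : ℝ →ᵃ[ℝ] E := AffineMap.lineMap x y
  have line_zero : line 0 = x := AffineMap.lineMap_apply_zero x y
  have line_one : line 1 = y := AffineMap.lineMap_apply_one x y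
  have deriv_along_line : HasDerivAt (f ∘ line) (f' (y - x)) 0 :=
    HasFDerivAt.comp_hasDerivAt (0 : ℝ) (by rwa [line_zero]) AffineMap.hasDerivAt_lineMap
  have le_slope : f' (y - x) ≤ slope (f ∘ line) 0 1 :=
    (hf.comp_affineMap line).le_slope_of_hasDerivAt
      (by rwa [Set.mem_preimage, line_zero]) (by rwa [Set.mem_preimage, line_one])
      one_pos deriv_along_line
  simp only [slope_def_field, Function.comp_apply, line_zero, line_one, sub_zero, div_one]
    at le_slope
  linarith

theorem add_inner_gradient_sub_le_of_convexOn {E : Type*} [NormedAddCommGroup E]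
    [InnerProductSpace ℝ E] [CompleteSpace E] {K : Set E} {f : E → ℝ} {x y : E}
    (hf : ConvexOn ℝ K f) (hx : x ∈ K) (hy : y ∈ K) (hdiff : DifferentiableAt ℝ f x) :
    f x + inner ℝ (gradient f x) (y - x) ≤ f y := by
  rw [inner_gradient_left]
  exact add_fderiv_sub_le_of_convexOn hf hx hy hdiff.hasFDerivAt

end ConvexFunction

section Projection

variable {F : Type*} [NormedAddCommGroup F] [InnerProductSpace ℝ F]

theorem norm_sub_le_of_isMinOn {K : Set F} (hK : Convex ℝ K) {a b z : F} (ha : a ∈ K)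
    (hb : b ∈ K) (hmin : IsMinOn (fun u ↦ ‖u - z‖) K a) : ‖a - b‖ ≤ ‖z - b‖ := by
  have dist_eq_iInf : ‖z - a‖ = ⨅ u : K, ‖z - u‖ := by
    simpa only [norm_sub_rev] using (hmin.iInf_eq ha).symm
  have obtuse : inner ℝ (z - a) (b - a) ≤ 0 :=
    (norm_eq_iInf_iff_real_inner_le_zero hK ha).1 dist_eq_iInf b hb
  have expand : ‖z - b‖ ^ 2 = ‖z - a‖ ^ 2 - 2 * inner ℝ (z - a) (b - a) + ‖a - b‖ ^ 2 := by
    rw [← sub_sub_sub_cancel_right z b a, norm_sub_sq_real, norm_sub_rev b a]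
  refine le_of_sq_le_sq ?_ (norm_nonneg _)
  linarith [sq_nonneg ‖z - a‖]

variable {E : Type*} [AddCommGroup E] [Module ℝ E]

theorem norm_map_sub_le_of_isMinOn {K : Set E} (hK : Convex ℝ K) (T : E →ₗ[ℝ] F) {a b z : E}
    (ha : a ∈ K) (hb : b ∈ K) (hmin : IsMinOn (fun u ↦ ‖T (u - z)‖) K a) :
    ‖T (a - b)‖ ≤ ‖T (z - b)‖ := by
  simp only [map_sub] at hmin ⊢
  exact norm_sub_le_of_isMinOn (hK.linear_image T) (Set.mem_image_of_mem T ha)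
    (Set.mem_image_of_mem T hb) (isMinOn_iff.2 (Set.forall_mem_image.2 (isMinOn_iff.1 hmin)))

theorem two_mul_inner_map_sub_le_of_isMinOn {K : Set E} (hK : Convex ℝ K) (T : E →ₗ[ℝ] F)
    {x z a b : E} {g : F} {η : ℝ} (hz : T z = T x - η • g) (ha : a ∈ K) (hb : b ∈ K)
    (hmin : IsMinOn (fun u ↦ ‖T (u - z)‖) K a) :
    2 * η * inner ℝ g (T (x - b)) ≤ ‖T (x - b)‖ ^ 2 - ‖T (a - b)‖ ^ 2 + η ^ 2 * ‖g‖ ^ 2 := by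
  have nonexpansive : ‖T (a - b)‖ ^ 2 ≤ ‖T (z - b)‖ ^ 2 := by
    gcongr
    exact norm_map_sub_le_of_isMinOn hK T ha hb hmin
  have step : T (z - b) = T (x - b) - η • g := by
    rw [map_sub, map_sub, hz, sub_right_comm]
  rw [step, norm_sub_sq_real, real_inner_smul_right, real_inner_comm, norm_smul, mul_pow,
    Real.norm_eq_abs, sq_abs] at nonexpansive
  linarith

theorem neg_inner_le_add_norm_sq (u v : F) {α : ℝ} (hα : 0 < α) :
    -inner ℝ u v ≤ α / 2 * ‖u‖ ^ 2 + 1 / (2 * α) * ‖v‖ ^ 2 := by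
  have expand : ‖α • u + v‖ ^ 2 = α ^ 2 * ‖u‖ ^ 2 + 2 * (α * inner ℝ u v) + ‖v‖ ^ 2 := by
    rw [norm_add_sq_real, real_inner_smul_left, norm_smul, mul_pow, Real.norm_eq_abs, sq_abs]
  have complete_square : α / 2 * ‖u‖ ^ 2 + 1 / (2 * α) * ‖v‖ ^ 2 + inner ℝ u v
      = 1 / (2 * α) * ‖α • u + v‖ ^ 2 := by
    rw [expand]
    field_simp
    ring
  have : 0 ≤ 1 / (2 * α) * ‖α • u + v‖ ^ 2 := by positivity
  linarith

end Projection

section DiagonalMetric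

variable {κ : Type*}

/-- The diagonal operator `x ↦ c ⊙ x` on Euclidean space, which turns a norm weighted by `c ^ 2`
into the Euclidean norm. -/
def diagScale (c : κ → ℝ) : EuclideanSpace ℝ κ →ₗ[ℝ] EuclideanSpace ℝ κ where
  toFun x := WithLp.toLp 2 fun h ↦ c h * x h
  map_add' x y := by ext h; exact mul_add (c h) (x h) (y h)
  map_smul' t x := by ext h; exact mul_left_comm (c h) t (x h)

theorem diagScale_apply (c : κ → ℝ) (x : EuclideanSpace ℝ κ) (h : κ) :
    diagScale c x h = c h * x h := rfl

variable [Fintype κ] {s : κ → ℝ}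

theorem norm_diagScale_sqrt_sq (hs : ∀ h, 0 ≤ s h) (x : EuclideanSpace ℝ κ) :
    ‖diagScale (fun h ↦ √(s h)) x‖ ^ 2 = ∑ h, s h * x h ^ 2 := by
  simp only [EuclideanSpace.real_norm_sq_eq, diagScale_apply, mul_pow, Real.sq_sqrt (hs _)]

theorem norm_diagScale_sqrt_inv_sq (hs : ∀ h, 0 ≤ s h) (x : EuclideanSpace ℝ κ) :
    ‖diagScale (fun h ↦ (√(s h))⁻¹) x‖ ^ 2 = ∑ h, x h ^ 2 / s h := by
  simp only [EuclideanSpace.real_norm_sq_eq, diagScale_apply, mul_pow, inv_pow,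
    Real.sq_sqrt (hs _), div_eq_inv_mul]

theorem inner_diagScale_inv_diagScale {c : κ → ℝ} (hc : ∀ h, c h ≠ 0)
    (x y : EuclideanSpace ℝ κ) :
    inner ℝ (diagScale (fun h ↦ (c h)⁻¹) x) (diagScale c y) = inner ℝ x y := by
  simp only [PiLp.inner_apply, diagScale_apply]
  refine Finset.sum_congr rfl fun h _ ↦ ?_
  have c_ne_zero := hc h
  simp only [RCLike.inner_apply, conj_trivial]
  field_simp

theorem neg_inner_le_add_weighted_sum_sq (hs : ∀ h, 0 < s h) {α : ℝ} (hα : 0 < α)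
    (x y : EuclideanSpace ℝ κ) :
    -inner ℝ x y ≤ α / 2 * ∑ h, x h ^ 2 / s h + 1 / (2 * α) * ∑ h, s h * y h ^ 2 := by
  rw [← inner_diagScale_inv_diagScale (fun h ↦ (Real.sqrt_pos.2 (hs h)).ne') x y,
    ← norm_diagScale_sqrt_inv_sq (fun h ↦ (hs h).le), ← norm_diagScale_sqrt_sq (fun h ↦ (hs h).le)]
  exact neg_inner_le_add_norm_sq _ _ hα

theorem two_mul_inner_le_of_weighted_projection {K : Set (EuclideanSpace ℝ κ)}
    (hK : Convex ℝ K) (hs : ∀ h, 0 < s h) {η : ℝ} {x m z a b : EuclideanSpace ℝ κ}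
    (hz : ∀ h, z h = x h - η * (m h / s h)) (ha : a ∈ K) (hb : b ∈ K)
    (hproj : ∀ u ∈ K, √(∑ h, s h * (a h - z h) ^ 2) ≤ √(∑ h, s h * (u h - z h) ^ 2)) :
    2 * η * inner ℝ m (x - b) ≤
      ∑ h, s h * (x h - b h) ^ 2 - ∑ h, s h * (a h - b h) ^ 2 + η ^ 2 * ∑ h, m h ^ 2 / s h := by
  let T := diagScale fun h ↦ √(s h)
  have norm_sq_T (x y : EuclideanSpace ℝ κ) : ‖T (x - y)‖ ^ 2 = ∑ h, s h * (x h - y h) ^ 2 :=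
    norm_diagScale_sqrt_sq (fun h ↦ (hs h).le) (x - y)
  have hmin : IsMinOn (fun u ↦ ‖T (u - z)‖) K a := isMinOn_iff.2 fun u hu ↦ by
    simpa only [← norm_sq_T, Real.sqrt_sq (norm_nonneg _)] using hproj u hu
  have step : T z = T x - η • diagScale (fun h ↦ (√(s h))⁻¹) m := by
    ext h
    have sqrt_mul_div : √(s h) * (m h / s h) = (√(s h))⁻¹ * m h := by
      rw [← Real.sqrt_div_self, mul_div_assoc', mul_div_right_comm]
    simp only [T, PiLp.sub_apply, PiLp.smul_apply, diagScale_apply, smul_eq_mul, hz, mul_sub,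
      mul_left_comm (√(s h)) η, sqrt_mul_div]
  rw [← norm_sq_T, ← norm_sq_T, ← norm_diagScale_sqrt_inv_sq (fun h ↦ (hs h).le),
    ← inner_diagScale_inv_diagScale (fun h ↦ (Real.sqrt_pos.2 (hs h)).ne') m (x - b)]
  exact two_mul_inner_map_sub_le_of_isMinOn hK T step ha hb hmin

end DiagonalMetric

theorem importance_weighted_step_le {κ : Type*} [Fintype κ] {K : Set (EuclideanSpace ℝ κ)}
    (hK : Convex ℝ K) {s : κ → ℝ} (hs : ∀ h, 0 < s h) {α p q w : ℝ} (hα : 0 < α) (hp : 0 < p)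
    (hw : w = q / p) {x m z a b : EuclideanSpace ℝ κ}
    (hz : ∀ h, z h = x h - α * w * (m h / s h)) (ha : a ∈ K) (hb : b ∈ K)
    (hproj : ∀ u ∈ K, √(∑ h, s h * (a h - z h) ^ 2) ≤ √(∑ h, s h * (u h - z h) ^ 2)) :
    q * inner ℝ m (x - b) ≤
      α / 2 * (p * w ^ 2 * ∑ h, m h ^ 2 / s h) +
      1 / (2 * α) * (p * (∑ h, s h * (x h - b h) ^ 2 - ∑ h, s h * (a h - b h) ^ 2)) := by
  have hq : q = p * w := by rw [hw, mul_div_cancel₀ q hp.ne']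
  calc q * inner ℝ m (x - b)
      = p / (2 * α) * (2 * (α * w) * inner ℝ m (x - b)) := by
        rw [hq]
        field_simp
    _ ≤ p / (2 * α) * (∑ h, s h * (x h - b h) ^ 2 - ∑ h, s h * (a h - b h) ^ 2 +
          (α * w) ^ 2 * ∑ h, m h ^ 2 / s h) := by
        gcongr
        exact two_mul_inner_le_of_weighted_projection hK hs hz ha hb hproj
    _ = _ := by
        field_simp
        ring

theorem momentum_gap_le_inner {E : Type*} [NormedAddCommGroup E] [InnerProductSpace ℝ E]
    {β : ℝ} (hβ : β ≤ 1) {m' g x y : E} {a b : ℝ} (hg : a + inner ℝ g (y - x) ≤ b) :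
    (1 - β) * (a - b) + β * inner ℝ m' (x - y) ≤
      inner ℝ (β • m' + (1 - β) • g) (x - y) := by
  have gap_le : a - b ≤ inner ℝ g (x - y) := by
    rw [← neg_sub y x, inner_neg_right]
    linarith
  rw [inner_add_left, real_inner_smul_left, real_inner_smul_left, add_comm]
  gcongr

theorem stmt_12_general {ι κ : Type*} [Fintype ι] [Fintype κ]
    {Θ : Set (EuclideanSpace ℝ κ)} (hΘ : Convex ℝ Θ) {f : ι → EuclideanSpace ℝ κ → ℝ}
    {θ θstar : EuclideanSpace ℝ κ} (hθstar : θstar ∈ Θ) {g : ι → EuclideanSpace ℝ κ}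
    (hg : ∀ i, ∀ u ∈ Θ, f i θ + inner ℝ (g i) (u - θ) ≤ f i u)
    {α β : ℝ} (hα : 0 < α) (hβ0 : 0 ≤ β) (hβ1 : β ≤ 1) (m' : EuclideanSpace ℝ κ)
    {p q w : ι → ℝ} (hp : ∀ i, 0 < p i) (hpsum : ∑ i, p i = 1)
    (hq : ∀ i, 0 ≤ q i) (hqsum : ∑ i, q i = 1) (hw : ∀ i, w i = q i / p i)
    {s : ι → κ → ℝ} (hs : ∀ i h, 0 < s i h) {m z θ' : ι → EuclideanSpace ℝ κ}
    (hm : ∀ i, m i = β • m' + (1 - β) • g i)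
    (hz : ∀ i h, z i h = θ h - α * w i * (m i h / s i h)) (hmem : ∀ i, θ' i ∈ Θ)
    (hproj : ∀ i, ∀ u ∈ Θ, √(∑ h, s i h * (θ' i h - z i h) ^ 2) ≤
      √(∑ h, s i h * (u h - z i h) ^ 2)) :
    (1 - β) * (∑ i, q i * f i θ - ∑ i, q i * f i θstar) ≤
      α / 2 * (∑ i, p i * w i ^ 2 * ∑ h, m i h ^ 2 / s i h) +
      1 / (2 * α) * (∑ i, p i *
        (∑ h, s i h * (θ h - θstar h) ^ 2 - ∑ h, s i h * (θ' i h - θstar h) ^ 2)) +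
      β * (∑ i, p i *
        (α / 2 * ∑ h, m' h ^ 2 / s i h +
         1 / (2 * α) * ∑ h, s i h * (θ h - θstar h) ^ 2)) := by
  have step_le (i : ι) := importance_weighted_step_le hΘ (hs i) hα (hp i) (hw i) (hz i)
    (hmem i) hθstar (hproj i)
  have gap_le (i : ι) : (1 - β) * (f i θ - f i θstar) + β * inner ℝ m' (θ - θstar) ≤
      inner ℝ (m i) (θ - θstar) := by
    rw [hm]
    exact momentum_gap_le_inner hβ1 (hg i θstar hθstar)
  have young (i : ι) := neg_inner_le_add_weighted_sum_sq (hs i) hα m' (θ - θstar)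
  calc (1 - β) * (∑ i, q i * f i θ - ∑ i, q i * f i θstar)
      = ∑ i, q i * ((1 - β) * (f i θ - f i θstar) + β * inner ℝ m' (θ - θstar)) +
          β * ∑ i, p i * -inner ℝ m' (θ - θstar) := by
        rw [← Finset.sum_mul, hpsum]
        simp only [mul_add, Finset.sum_add_distrib, ← Finset.sum_mul, hqsum,
          mul_left_comm (q _) (1 - β), mul_sub (q _), ← Finset.mul_sum, Finset.sum_sub_distrib]
        ring
    _ ≤ ∑ i, (α / 2 * (p i * w i ^ 2 * ∑ h, m i h ^ 2 / s i h) + 1 / (2 * α) * (p i *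
          (∑ h, s i h * (θ h - θstar h) ^ 2 - ∑ h, s i h * (θ' i h - θstar h) ^ 2))) +
        β * ∑ i, p i * (α / 2 * ∑ h, m' h ^ 2 / s i h +
          1 / (2 * α) * ∑ h, s i h * (θ h - θstar h) ^ 2) := by
        gcongr with i _ i _
        · exact (mul_le_mul_of_nonneg_left (gap_le i) (hq i)).trans (step_le i)
        · exact (hp i).le
        · exact young i
    _ = _ := by rw [Finset.sum_add_distrib, ← Finset.mul_sum, ← Finset.mul_sum]

/-- per-step inequality for DASGrad (Theorem 4 of the paper; Theorem 3 is the
uniform-probability case).  `m_i = β₁ m' + (1−β₁) ∇f_i(θ)`, `z_i = θ − α w_i (m_i/√v̂_i)`, and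
`θ'_i` is the projection of `z_i` onto `Θ` in the norm weighted by `diag(√v̂_i)`.  Weighted
squared norms are written out as `‖v^{1/4}⊙x‖₂² = Σ_h √(v_h) x_h²` and
`‖v^{−1/4}⊙x‖₂² = Σ_h x_h²/√(v_h)`. -/
theorem stmt_12 (d n : ℕ) (hn : 0 < n)
    (Θ : Set (EuclideanSpace ℝ (Fin d))) (hΘconv : Convex ℝ Θ)
    (f : Fin n → EuclideanSpace ℝ (Fin d) → ℝ)
    (hconv : ∀ i, ConvexOn ℝ Set.univ (f i))
    (hdiff : ∀ i, Differentiable ℝ (f i))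
    (θ θstar : EuclideanSpace ℝ (Fin d)) (hθ : θ ∈ Θ) (hθstar : θstar ∈ Θ)
    (α : ℝ) (hα : 0 < α)
    (β₁ : ℝ) (hβ₁0 : 0 ≤ β₁) (hβ₁1 : β₁ < 1)
    (m' : EuclideanSpace ℝ (Fin d))  -- previous first-moment vector
    (p : Fin n → ℝ) (hp : ∀ i, 0 < p i) (hpsum : ∑ i, p i = 1)
    (w : Fin n → ℝ) (hw : ∀ i, w i = 1 / ((n : ℝ) * p i))
    (vhat : Fin n → Fin d → ℝ) (hvhat : ∀ i h, 0 < vhat i h)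
    (m : Fin n → EuclideanSpace ℝ (Fin d))
    (hm : ∀ i, m i = β₁ • m' + (1 - β₁) • gradient (f i) θ)
    (z : Fin n → EuclideanSpace ℝ (Fin d))
    (hz : ∀ i (h : Fin d), z i h = θ h - α * w i * (m i h / Real.sqrt (vhat i h)))
    (θ' : Fin n → EuclideanSpace ℝ (Fin d))
    (hmem : ∀ i, θ' i ∈ Θ)
    (hproj : ∀ i, ∀ u ∈ Θ,
      Real.sqrt (∑ h, Real.sqrt (vhat i h) * (θ' i h - z i h) ^ 2) ≤
        Real.sqrt (∑ h, Real.sqrt (vhat i h) * (u h - z i h) ^ 2)) :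
    (1 - β₁) * ((1 / (n : ℝ)) * ∑ i, f i θ - (1 / (n : ℝ)) * ∑ i, f i θstar) ≤
      (α / 2) * (∑ i, p i * (w i) ^ 2 * ∑ h, (m i h) ^ 2 / Real.sqrt (vhat i h)) +
      (1 / (2 * α)) * (∑ i, p i *
        ((∑ h, Real.sqrt (vhat i h) * (θ h - θstar h) ^ 2) -
         (∑ h, Real.sqrt (vhat i h) * (θ' i h - θstar h) ^ 2))) +
      β₁ * (∑ i, p i *
        ((α / 2) * (∑ h, (m' h) ^ 2 / Real.sqrt (vhat i h)) +
         (1 / (2 * α)) * (∑ h, Real.sqrt (vhat i h) * (θ h - θstar h) ^ 2))) := by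
  simpa only [← Finset.mul_sum] using stmt_12_general hΘconv hθstar
    (fun i u hu ↦ add_inner_gradient_sub_le_of_convexOn
      ((hconv i).subset (Set.subset_univ Θ) hΘconv) hθ hu (hdiff i θ))
    hα hβ₁0 hβ₁1.le m' hp hpsum (q := fun _ ↦ 1 / (n : ℝ)) (fun _ ↦ by positivity)
    (by simp [hn.ne']) (fun i ↦ (hw i).trans (div_div _ _ _).symm)
    (fun i h ↦ Real.sqrt_pos.2 (hvhat i h)) hm hz hmem hproj
end

section
/- Let T ≥ 1, α > 0, 0 ≤ β₁ < 1, α_t = α/√t, and D ≥ 0. Let v̂₁, …, v̂_T ∈ ℝ^d have strictly positive entries and be componentwise nondecreasing (v̂_{t−1,h} ≤ v̂_{t,h} for all t, h), and let θ₁, …, θ_{T+1}, θ* ∈ ℝ^d satisfy |θ_{t,h} − θ*_h| ≤ D for all t ∈ {1, …, T+1} and all h. Then Σ_{t=1}^T (1/(2α_t(1−β₁))) ( ‖v̂_t^{1/4} ⊙ (θ_t − θ*)‖₂² − ‖v̂_t^{1/4} ⊙ (θ_{t+1} − θ*)‖₂² ) ≤ (D² √T / (2α(1−β₁))) Σ_{h=1}^d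 √(v̂_{T,h}). -/
/-!
Expanding the squared norms and exchanging the sums splits the potential into coordinates. In
coordinate `h` the coefficient of `(θ_{t,h} - θ*_h)² - (θ_{t+1,h} - θ*_h)²` is
`√t √v̂_{t,h} / (2α(1-β₁))`, which is nonnegative and nondecreasing in `t`. After summation by parts
every square at a time `t ≤ T` carries a nonnegative factor, so it can be replaced by `D²`; the
coefficients then telescope to the one at `t = T`.
-/

theorem sum_Icc_mul_sub_succ_le {R : Type*} [Ring R] [PartialOrder R] [IsOrderedRing R]
    {w a : ℕ → R} {C : R} {T : ℕ} (hT : 1 ≤ T) (hw_one : 0 ≤ w 1)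
    (hw : MonotoneOn w (Set.Icc 1 T)) (ha : ∀ t ∈ Set.Icc 1 T, a t ≤ C) :
    ∑ t ∈ Finset.Icc 1 T, w t * (a t - a (t + 1)) ≤ w T * (C - a (T + 1)) := by
  induction T, hT using Nat.le_induction with
  | base =>
    rw [Finset.Icc_self, Finset.sum_singleton]
    exact mul_le_mul_of_nonneg_left (sub_le_sub_right (ha 1 ⟨le_rfl, le_rfl⟩) _) hw_one
  | succ T hT ih =>
    have hsub : Set.Icc 1 T ⊆ Set.Icc 1 (T + 1) := Set.Icc_subset_Icc_right T.le_succ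
    have hlast : T + 1 ∈ Set.Icc 1 (T + 1) := ⟨by omega, le_rfl⟩
    have hw_succ : w T ≤ w (T + 1) := hw (hsub ⟨hT, le_rfl⟩) hlast T.le_succ
    have ha_succ : 0 ≤ C - a (T + 1) := sub_nonneg.2 (ha _ hlast)
    calc ∑ t ∈ Finset.Icc 1 (T + 1), w t * (a t - a (t + 1))
        = ∑ t ∈ Finset.Icc 1 T, w t * (a t - a (t + 1))
            + w (T + 1) * (a (T + 1) - a (T + 1 + 1)) := Finset.sum_Icc_succ_top (by omega) _
      _ ≤ w T * (C - a (T + 1)) + w (T + 1) * (a (T + 1) - a (T + 1 + 1)) := by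
        gcongr
        exact ih (hw.mono hsub) fun t ht => ha t (hsub ht)
      _ ≤ w (T + 1) * (C - a (T + 1)) + w (T + 1) * (a (T + 1) - a (T + 1 + 1)) := by
        gcongr
      _ = w (T + 1) * (C - a (T + 1 + 1)) := by rw [← mul_add, sub_add_sub_cancel]

/-- In `stmt_13`, `c t` is `1 / (2α_t(1-β₁))`, `w t h` is `√v̂_{t,h}` and `x t` is `θ_t - θ*`. -/
theorem stmt_13_general {ι R : Type*} [Fintype ι] [CommRing R] [LinearOrder R]
    [IsStrictOrderedRing R] {T : ℕ} (hT : 1 ≤ T) {c : ℕ → R} (hc_one : 0 ≤ c 1)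
    (hc : MonotoneOn c (Set.Icc 1 T)) {w : ℕ → ι → R} (hw_one : 0 ≤ w 1)
    (hw : MonotoneOn w (Set.Icc 1 T)) {x : ℕ → ι → R} {D : R}
    (hx : ∀ t ∈ Set.Icc 1 T, ∀ h, |x t h| ≤ D) :
    ∑ t ∈ Finset.Icc 1 T,
        c t * ((∑ h, w t h * x t h ^ 2) - ∑ h, w t h * x (t + 1) h ^ 2) ≤
      D ^ 2 * c T * ∑ h, w T h := by
  have h_one : 1 ∈ Set.Icc 1 T := ⟨le_rfl, hT⟩
  have hc_nonneg (t) (ht : t ∈ Set.Icc 1 T) : 0 ≤ c t := hc_one.trans (hc h_one ht ht.1)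
  have hw_nonneg (t) (ht : t ∈ Set.Icc 1 T) (h) : 0 ≤ w t h :=
    (hw_one.trans (hw h_one ht ht.1)) h
  have hcw (h) : MonotoneOn (fun t => c t * w t h) (Set.Icc 1 T) := fun s hs t ht hst =>
    mul_le_mul (hc hs ht hst) (hw hs ht hst h) (hw_nonneg s hs h) (hc_nonneg t ht)
  have hx_sq (t) (ht : t ∈ Set.Icc 1 T) (h) : x t h ^ 2 ≤ D ^ 2 :=
    sq_le_sq.2 ((hx t ht h).trans (le_abs_self D))
  have hT_mem : T ∈ Set.Icc 1 T := ⟨hT, le_rfl⟩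
  calc ∑ t ∈ Finset.Icc 1 T, c t * ((∑ h, w t h * x t h ^ 2) - ∑ h, w t h * x (t + 1) h ^ 2)
      = ∑ h, ∑ t ∈ Finset.Icc 1 T, c t * w t h * (x t h ^ 2 - x (t + 1) h ^ 2) := by
        rw [Finset.sum_comm]
        simp only [← Finset.sum_sub_distrib, ← mul_sub, Finset.mul_sum, mul_assoc]
    _ ≤ ∑ h, c T * w T h * (D ^ 2 - x (T + 1) h ^ 2) := Finset.sum_le_sum fun h _ =>
        sum_Icc_mul_sub_succ_le hT (mul_nonneg hc_one (hw_one h)) (hcw h)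
          fun t ht => hx_sq t ht h
    _ ≤ ∑ h, c T * w T h * D ^ 2 := Finset.sum_le_sum fun h _ =>
        mul_le_mul_of_nonneg_left (sub_le_self _ (sq_nonneg _))
          (mul_nonneg (hc_nonneg T hT_mem) (hw_nonneg T hT_mem h))
    _ = D ^ 2 * c T * ∑ h, w T h := by
        rw [Finset.mul_sum]
        exact Finset.sum_congr rfl fun h _ => by ring

/-- Lemma D.1 of the paper: AMSGrad/DASGrad potential telescoping bound.
With `α_t = α/√t`, componentwise nondecreasing positive vectors `v̂_t`, and
`|θ_{t,h} − θ*_h| ≤ D`: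
`Σ_{t=1}^T (1/(2α_t(1−β₁))) (‖v̂_t^{1/4}⊙(θ_t−θ*)‖₂² − ‖v̂_t^{1/4}⊙(θ_{t+1}−θ*)‖₂²)
  ≤ (D²√T/(2α(1−β₁))) Σ_h √(v̂_{T,h})`. -/
theorem stmt_13 (d : ℕ) (T : ℕ) (hT : 1 ≤ T) (α : ℝ) (hα : 0 < α)
    (β₁ : ℝ) (hβ₁0 : 0 ≤ β₁) (hβ₁1 : β₁ < 1) (D : ℝ) (hD : 0 ≤ D)
    (vhat : ℕ → Fin d → ℝ)
    (hvpos : ∀ t, 1 ≤ t → t ≤ T → ∀ h, 0 < vhat t h)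
    (hvmono : ∀ t, 1 ≤ t → t < T → ∀ h, vhat t h ≤ vhat (t + 1) h)
    (θ : ℕ → Fin d → ℝ) (θstar : Fin d → ℝ)
    (hθ : ∀ t, 1 ≤ t → t ≤ T + 1 → ∀ h, |θ t h - θstar h| ≤ D) :
    ∑ t ∈ Finset.Icc 1 T, (1 / (2 * (α / Real.sqrt t) * (1 - β₁))) *
        ((∑ h, Real.sqrt (vhat t h) * (θ t h - θstar h) ^ 2) -
         (∑ h, Real.sqrt (vhat t h) * (θ (t + 1) h - θstar h) ^ 2)) ≤
      (D ^ 2 * Real.sqrt T / (2 * α * (1 - β₁))) * ∑ h, Real.sqrt (vhat T h) := by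
  have hscale : 0 ≤ 2 * α * (1 - β₁) := mul_nonneg (by positivity) (sub_nonneg.2 hβ₁1.le)
  have hcoeff (t : ℕ) : 1 / (2 * (α / √t) * (1 - β₁)) = √t / (2 * α * (1 - β₁)) := by
    rw [mul_div_assoc', div_mul_eq_mul_div, one_div_div]
  have hcoeff_mono : Monotone fun t : ℕ => √t / (2 * α * (1 - β₁)) := fun s t hst =>
    div_le_div_of_nonneg_right (Real.sqrt_le_sqrt (Nat.cast_le.2 hst)) hscale
  have hsqrt_mono : MonotoneOn (fun t h => √(vhat t h)) (Set.Icc 1 T) :=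
    monotoneOn_of_le_add_one Set.ordConnected_Icc fun t _ ht ht' h =>
      Real.sqrt_le_sqrt (hvmono t ht.1 ht'.2 h)
  simp only [hcoeff, mul_div_assoc]
  exact stmt_13_general (x := fun t h => θ t h - θstar h) hT
    (div_nonneg (Real.sqrt_nonneg _) hscale)
    (hcoeff_mono.monotoneOn _) (fun h => Real.sqrt_nonneg _) hsqrt_mono
    fun t ht => hθ t ht.1 (ht.2.trans T.le_succ)
end

section
/- Let g₁, …, g_t ∈ ℝ^d, let 0 ≤ β_{1,τ} ≤ β₁ < 1 for τ = 1, …, t, let 0 < β₂ < 1, and set γ = β₁/√β₂. Define m₀ = 0, m_τ = β_{1,τ} m_{τ−1} + (1 − β_{1,τ}) g_τ, and v₀ = 0, v_τ = β₂ v_{τ−1} + (1 − β₂) g_τ² (componentwise square). Then, with the convention that a term m_{t,h}²/√(v_{t,h}) is 0 whenever v_{t,h} = 0: Σ_{h=1}^d m_{t,h}² / √(v_{t,h}) ≤ ( 1 / ((1−β₁) √(1−β₂)) ) Σ_{τ=1}^t γ^{t−τ} ‖g_τ‖₁. -/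
/-!
By Jensen's inequality `m_t² ≤ ∑ τ, β₁ ^ (t - τ) * g_τ²`, while each single term of the geometric
expansion of `v_t` gives `√v_t ≥ √(1 - β₂) * √β₂ ^ (t - τ) * |g_τ|`. Dividing the first sum termwise
by `√v_t` cancels one factor `|g_τ|` and leaves the ratio `(β₁ / √β₂) ^ (t - τ)`. The factor
`1 / (1 - β₁)` is slack: applying Jensen's inequality to the convex weights avoids it.
-/

/-- The exponential moving average of `x 1, x 2, …` started at `0`, where `b τ` is the weight of the
past at time `τ`. The values `b 0` and `x 0` are ignored. -/
def ema {𝕜 E : Type*} [Ring 𝕜] [AddCommMonoid E] [Module 𝕜 E] (b : ℕ → 𝕜) (x : ℕ → E) : ℕ → E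
  | 0 => 0
  | n + 1 => b (n + 1) • ema b x n + (1 - b (n + 1)) • x (n + 1)

theorem eq_ema {𝕜 E : Type*} [Ring 𝕜] [AddCommMonoid E] [Module 𝕜 E] {b : ℕ → 𝕜} {x y : ℕ → E}
    {n : ℕ} (h_zero : y 0 = 0)
    (h_step : ∀ τ ∈ Finset.Icc 1 n, y τ = b τ • y (τ - 1) + (1 - b τ) • x τ) :
    y n = ema b x n := by
  induction n with
  | zero => exact h_zero
  | succ n ih =>
    rw [h_step (n + 1) (by simp), Nat.add_sub_cancel,
      ih fun τ hτ => h_step τ (Finset.Icc_subset_Icc_right n.le_succ hτ), ema]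

section Convex

variable {𝕜 E : Type*} [Ring 𝕜] [PartialOrder 𝕜] [IsOrderedRing 𝕜] [AddCommMonoid E] [Module 𝕜 E]
  {s : Set E} {b : ℕ → 𝕜} {x : ℕ → E} {n : ℕ}

theorem ema_mem_of_convex (hs : Convex 𝕜 s) (h_zero : 0 ∈ s)
    (hb : ∀ τ ∈ Finset.Icc 1 n, b τ ∈ Set.Icc 0 1) (hx : ∀ τ ∈ Finset.Icc 1 n, x τ ∈ s) :
    ema b x n ∈ s := by
  induction n with
  | zero => exact h_zero
  | succ n ih =>
    have h_subset := Finset.Icc_subset_Icc_right (a := 1) n.le_succ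
    have h_last : n + 1 ∈ Finset.Icc 1 (n + 1) := by simp
    exact hs (ih (fun τ hτ => hb τ (h_subset hτ)) fun τ hτ => hx τ (h_subset hτ))
      (hx _ h_last) (hb _ h_last).1 (sub_nonneg.2 (hb _ h_last).2) (add_sub_cancel _ _)

theorem map_ema_le_ema_of_convexOn {F : Type*} [AddCommMonoid F] [PartialOrder F]
    [IsOrderedAddMonoid F] [Module 𝕜 F] [PosSMulMono 𝕜 F] {φ : E → F} (hφ : ConvexOn 𝕜 s φ)
    (h_zero : 0 ∈ s) (hφ_zero : φ 0 ≤ 0)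
    (hb : ∀ τ ∈ Finset.Icc 1 n, b τ ∈ Set.Icc 0 1) (hx : ∀ τ ∈ Finset.Icc 1 n, x τ ∈ s) :
    φ (ema b x n) ≤ ema b (fun τ => φ (x τ)) n := by
  induction n with
  | zero => exact hφ_zero
  | succ n ih =>
    have h_subset := Finset.Icc_subset_Icc_right (a := 1) n.le_succ
    have h_last : n + 1 ∈ Finset.Icc 1 (n + 1) := by simp
    have hb' : ∀ τ ∈ Finset.Icc 1 n, b τ ∈ Set.Icc 0 1 := fun τ hτ => hb τ (h_subset hτ)
    have hx' : ∀ τ ∈ Finset.Icc 1 n, x τ ∈ s := fun τ hτ => hx τ (h_subset hτ)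
    calc φ (ema b x (n + 1))
        ≤ b (n + 1) • φ (ema b x n) + (1 - b (n + 1)) • φ (x (n + 1)) :=
          hφ.2 (ema_mem_of_convex hφ.1 h_zero hb' hx') (hx _ h_last) (hb _ h_last).1
            (sub_nonneg.2 (hb _ h_last).2) (add_sub_cancel _ _)
      _ ≤ ema b (fun τ => φ (x τ)) (n + 1) :=
          add_le_add_left (smul_le_smul_of_nonneg_left (ih hb' hx') (hb _ h_last).1) _

end Convex

theorem sum_Icc_pow_sub_mul_succ {R : Type*} [Semiring R] (c : R) (y : ℕ → R) (n : ℕ) :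
    ∑ τ ∈ Finset.Icc 1 (n + 1), c ^ (n + 1 - τ) * y τ =
      c * ∑ τ ∈ Finset.Icc 1 n, c ^ (n - τ) * y τ + y (n + 1) := by
  rw [Finset.sum_Icc_succ_top n.succ_pos, Nat.sub_self, pow_zero, one_mul, Finset.mul_sum]
  congr 1
  refine Finset.sum_congr rfl fun τ hτ => ?_
  rw [Nat.succ_sub (Finset.mem_Icc.1 hτ).2, pow_succ', mul_assoc]

theorem ema_const {R : Type*} [CommRing R] (β : R) (y : ℕ → R) (n : ℕ) :
    ema (fun _ => β) y n = (1 - β) * ∑ τ ∈ Finset.Icc 1 n, β ^ (n - τ) * y τ := by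
  induction n with
  | zero => simp [ema]
  | succ n ih =>
    rw [ema, ih, sum_Icc_pow_sub_mul_succ, smul_eq_mul, smul_eq_mul]
    ring

section OrderedRing

variable {R : Type*} [CommRing R] [PartialOrder R] [IsOrderedRing R] {y : ℕ → R} {β : R} {n : ℕ}

theorem ema_le_sum_pow_mul {b : ℕ → R} (hβ : 0 ≤ β)
    (hb : ∀ τ ∈ Finset.Icc 1 n, b τ ∈ Set.Icc 0 β) (hy : ∀ τ ∈ Finset.Icc 1 n, 0 ≤ y τ) :
    ema b y n ≤ ∑ τ ∈ Finset.Icc 1 n, β ^ (n - τ) * y τ := by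
  induction n with
  | zero => simp [ema]
  | succ n ih =>
    have h_subset := Finset.Icc_subset_Icc_right (a := 1) n.le_succ
    have h_last : n + 1 ∈ Finset.Icc 1 (n + 1) := by simp
    have hy' : ∀ τ ∈ Finset.Icc 1 n, 0 ≤ y τ := fun τ hτ => hy τ (h_subset hτ)
    have h_sum : 0 ≤ ∑ τ ∈ Finset.Icc 1 n, β ^ (n - τ) * y τ :=
      Finset.sum_nonneg fun τ hτ => mul_nonneg (pow_nonneg hβ _) (hy' τ hτ)
    obtain ⟨hb_nonneg, hb_le⟩ := hb _ h_last
    rw [sum_Icc_pow_sub_mul_succ]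
    refine add_le_add ?_ (mul_le_of_le_one_left (hy _ h_last) (sub_le_self _ hb_nonneg))
    calc b (n + 1) * ema b y n
        ≤ b (n + 1) * ∑ τ ∈ Finset.Icc 1 n, β ^ (n - τ) * y τ :=
          mul_le_mul_of_nonneg_left (ih (fun τ hτ => hb τ (h_subset hτ)) hy') hb_nonneg
      _ ≤ β * ∑ τ ∈ Finset.Icc 1 n, β ^ (n - τ) * y τ := mul_le_mul_of_nonneg_right hb_le h_sum

theorem one_sub_mul_pow_mul_le_ema_const {τ : ℕ} (hβ : β ∈ Set.Icc 0 1)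
    (hy : ∀ σ ∈ Finset.Icc 1 n, 0 ≤ y σ) (hτ : τ ∈ Finset.Icc 1 n) :
    (1 - β) * (β ^ (n - τ) * y τ) ≤ ema (fun _ => β) y n := by
  rw [ema_const]
  refine mul_le_mul_of_nonneg_left ?_ (sub_nonneg.2 hβ.2)
  exact Finset.single_le_sum (f := fun σ => β ^ (n - σ) * y σ)
    (fun σ hσ => mul_nonneg (pow_nonneg hβ.1 _) (hy σ hσ)) hτ

end OrderedRing

section Real

variable {x : ℕ → ℝ} {β₂ : ℝ} {n : ℕ}

theorem sq_ema_le_sum_pow_mul_sq {b : ℕ → ℝ} {β₁ : ℝ} (hβ₁ : β₁ ∈ Set.Icc 0 1)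
    (hb : ∀ τ ∈ Finset.Icc 1 n, b τ ∈ Set.Icc 0 β₁) :
    ema b x n ^ 2 ≤ ∑ τ ∈ Finset.Icc 1 n, β₁ ^ (n - τ) * x τ ^ 2 :=
  calc ema b x n ^ 2
      ≤ ema b (fun τ => x τ ^ 2) n :=
        map_ema_le_ema_of_convexOn even_two.convexOn_pow (Set.mem_univ 0) (by simp)
          (fun τ hτ => Set.Icc_subset_Icc_right hβ₁.2 (hb τ hτ)) fun _ _ => Set.mem_univ _
    _ ≤ ∑ τ ∈ Finset.Icc 1 n, β₁ ^ (n - τ) * x τ ^ 2 :=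
        ema_le_sum_pow_mul hβ₁.1 hb fun _ _ => sq_nonneg _

theorem sqrt_mul_sqrt_pow_mul_abs_le_sqrt_ema_sq {τ : ℕ} (hβ₂ : β₂ ∈ Set.Icc 0 1)
    (hτ : τ ∈ Finset.Icc 1 n) :
    √(1 - β₂) * √β₂ ^ (n - τ) * |x τ| ≤ √(ema (fun _ => β₂) (fun σ => x σ ^ 2) n) := by
  refine Real.le_sqrt_of_sq_le ?_
  calc (√(1 - β₂) * √β₂ ^ (n - τ) * |x τ|) ^ 2
      = √(1 - β₂) ^ 2 * ((√β₂ ^ 2) ^ (n - τ) * |x τ| ^ 2) := by ring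
    _ = (1 - β₂) * (β₂ ^ (n - τ) * x τ ^ 2) := by
        rw [Real.sq_sqrt (sub_nonneg.2 hβ₂.2), Real.sq_sqrt hβ₂.1, sq_abs]
    _ ≤ ema (fun _ => β₂) (fun σ => x σ ^ 2) n :=
        one_sub_mul_pow_mul_le_ema_const hβ₂ (fun _ _ => sq_nonneg _) hτ

theorem sq_div_sqrt_ema_sq_le {τ : ℕ} (hβ₂ : β₂ ∈ Set.Ioo 0 1) (hτ : τ ∈ Finset.Icc 1 n) :
    x τ ^ 2 / √(ema (fun _ => β₂) (fun σ => x σ ^ 2) n) ≤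
      |x τ| / (√(1 - β₂) * √β₂ ^ (n - τ)) := by
  have h_pos : 0 < √(1 - β₂) * √β₂ ^ (n - τ) :=
    mul_pos (Real.sqrt_pos.2 (sub_pos.2 hβ₂.2)) (pow_pos (Real.sqrt_pos.2 hβ₂.1) _)
  refine div_le_of_le_mul₀ (Real.sqrt_nonneg _) (by positivity) ?_
  rw [div_mul_eq_mul_div, le_div_iff₀ h_pos, ← sq_abs]
  calc |x τ| ^ 2 * (√(1 - β₂) * √β₂ ^ (n - τ))
      = |x τ| * (√(1 - β₂) * √β₂ ^ (n - τ) * |x τ|) := by ring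
    _ ≤ |x τ| * √(ema (fun _ => β₂) (fun σ => x σ ^ 2) n) := by
        gcongr
        exact sqrt_mul_sqrt_pow_mul_abs_le_sqrt_ema_sq (Set.Ioo_subset_Icc_self hβ₂) hτ

theorem sq_ema_div_sqrt_ema_sq_le {b : ℕ → ℝ} {β₁ : ℝ} (hβ₁ : β₁ ∈ Set.Icc 0 1)
    (hβ₂ : β₂ ∈ Set.Ioo 0 1) (hb : ∀ τ ∈ Finset.Icc 1 n, b τ ∈ Set.Icc 0 β₁) :
    ema b x n ^ 2 / √(ema (fun _ => β₂) (fun τ => x τ ^ 2) n) ≤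
      1 / √(1 - β₂) * ∑ τ ∈ Finset.Icc 1 n, (β₁ / √β₂) ^ (n - τ) * |x τ| := by
  set v := ema (fun _ => β₂) (fun τ => x τ ^ 2) n
  calc ema b x n ^ 2 / √v
      ≤ (∑ τ ∈ Finset.Icc 1 n, β₁ ^ (n - τ) * x τ ^ 2) / √v := by
        gcongr
        exact sq_ema_le_sum_pow_mul_sq hβ₁ hb
    _ = ∑ τ ∈ Finset.Icc 1 n, β₁ ^ (n - τ) * (x τ ^ 2 / √v) := by
        simp only [Finset.sum_div, mul_div_assoc]
    _ ≤ ∑ τ ∈ Finset.Icc 1 n, β₁ ^ (n - τ) * (|x τ| / (√(1 - β₂) * √β₂ ^ (n - τ))) :=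
        Finset.sum_le_sum fun τ hτ =>
          mul_le_mul_of_nonneg_left (sq_div_sqrt_ema_sq_le hβ₂ hτ) (pow_nonneg hβ₁.1 _)
    _ = 1 / √(1 - β₂) * ∑ τ ∈ Finset.Icc 1 n, (β₁ / √β₂) ^ (n - τ) * |x τ| := by
        rw [Finset.mul_sum]
        refine Finset.sum_congr rfl fun τ _ => ?_
        rw [div_pow]
        ring

end Real

theorem stmt_14_general {ι : Type*} [Fintype ι] {t : ℕ} {g : ℕ → ι → ℝ} {β1 : ℕ → ℝ} {β₁ β₂ : ℝ}
    (hβ1 : ∀ τ, 1 ≤ τ → τ ≤ t → 0 ≤ β1 τ ∧ β1 τ ≤ β₁) (hβ₁ : β₁ ∈ Set.Icc 0 1)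
    (hβ₂ : β₂ ∈ Set.Ioo 0 1) {m v : ℕ → ι → ℝ} (hm0 : ∀ h, m 0 h = 0) (hv0 : ∀ h, v 0 h = 0)
    (hm : ∀ τ, 1 ≤ τ → τ ≤ t → ∀ h, m τ h = β1 τ * m (τ - 1) h + (1 - β1 τ) * g τ h)
    (hv : ∀ τ, 1 ≤ τ → τ ≤ t → ∀ h, v τ h = β₂ * v (τ - 1) h + (1 - β₂) * (g τ h) ^ 2) :
    ∑ h, m t h ^ 2 / √(v t h) ≤
      1 / √(1 - β₂) * ∑ τ ∈ Finset.Icc 1 t, (β₁ / √β₂) ^ (t - τ) * ∑ h, |g τ h| := by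
  have hm_ema (h : ι) : m t h = ema β1 (g · h) t :=
    eq_ema (y := (m · h)) (hm0 h) fun τ hτ =>
      hm τ (Finset.mem_Icc.1 hτ).1 (Finset.mem_Icc.1 hτ).2 h
  have hv_ema (h : ι) : v t h = ema (fun _ => β₂) (fun τ => g τ h ^ 2) t :=
    eq_ema (y := (v · h)) (hv0 h) fun τ hτ =>
      hv τ (Finset.mem_Icc.1 hτ).1 (Finset.mem_Icc.1 hτ).2 h
  calc ∑ h, m t h ^ 2 / √(v t h)
      ≤ ∑ h, 1 / √(1 - β₂) * ∑ τ ∈ Finset.Icc 1 t, (β₁ / √β₂) ^ (t - τ) * |g τ h| := by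
        refine Finset.sum_le_sum fun h _ => ?_
        rw [hm_ema, hv_ema]
        exact sq_ema_div_sqrt_ema_sq_le hβ₁ hβ₂ fun τ hτ =>
          hβ1 τ (Finset.mem_Icc.1 hτ).1 (Finset.mem_Icc.1 hτ).2
    _ = 1 / √(1 - β₂) * ∑ τ ∈ Finset.Icc 1 t, (β₁ / √β₂) ^ (t - τ) * ∑ h, |g τ h| := by
        rw [← Finset.mul_sum, Finset.sum_comm]
        simp only [Finset.mul_sum]

/-- single-step moment bound inside Lemma D.5, after Kingma & Ba and Reddi
et al.:  with `m_τ = β_{1,τ} m_{τ−1} + (1−β_{1,τ}) g_τ`, `v_τ = β₂ v_{τ−1} + (1−β₂) g_τ²`,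
`0 ≤ β_{1,τ} ≤ β₁ < 1`, `0 < β₂ < 1` and `γ = β₁/√β₂`:
`Σ_h m_{t,h}²/√(v_{t,h}) ≤ (1/((1−β₁)√(1−β₂))) Σ_{τ=1}^t γ^{t−τ} ‖g_τ‖₁`.
(Division by zero in Lean is zero, matching the convention that terms with `v_{t,h} = 0`
vanish.) -/
theorem stmt_14 (d : ℕ) (t : ℕ) (ht : 1 ≤ t)
    (g : ℕ → Fin d → ℝ)
    (β1 : ℕ → ℝ) (β₁ : ℝ) (hβ1 : ∀ τ, 1 ≤ τ → τ ≤ t → 0 ≤ β1 τ ∧ β1 τ ≤ β₁)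
    (hβ₁ : β₁ < 1) (hβ₁0 : 0 ≤ β₁)
    (β₂ : ℝ) (hβ₂0 : 0 < β₂) (hβ₂1 : β₂ < 1)
    (γ : ℝ) (hγ : γ = β₁ / Real.sqrt β₂)
    (m v : ℕ → Fin d → ℝ)
    (hm0 : ∀ h, m 0 h = 0) (hv0 : ∀ h, v 0 h = 0)
    (hm : ∀ τ, 1 ≤ τ → τ ≤ t → ∀ h, m τ h = β1 τ * m (τ - 1) h + (1 - β1 τ) * g τ h)
    (hv : ∀ τ, 1 ≤ τ → τ ≤ t → ∀ h, v τ h = β₂ * v (τ - 1) h + (1 - β₂) * (g τ h) ^ 2) :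
    ∑ h, (m t h) ^ 2 / Real.sqrt (v t h) ≤
      (1 / ((1 - β₁) * Real.sqrt (1 - β₂))) *
        ∑ τ ∈ Finset.Icc 1 t, γ ^ (t - τ) * ∑ h, |g τ h| := by
  subst hγ
  exact (stmt_14_general hβ1 ⟨hβ₁0, hβ₁.le⟩ ⟨hβ₂0, hβ₂1⟩ hm0 hv0 hm hv).trans <|
    mul_le_mul_of_nonneg_right
      (one_div_le_one_div_of_le (mul_pos (sub_pos.2 hβ₁) (Real.sqrt_pos.2 (sub_pos.2 hβ₂1)))
        (mul_le_of_le_one_left (Real.sqrt_nonneg _) (sub_le_self 1 hβ₁0))) (by positivity)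
end

section
/- Let T ≥ 1, α > 0, 0 < β₂ < 1, and for each t let 0 ≤ β_{1,t} ≤ β₁ < 1 with γ = β₁/√β₂ < 1; set α_t = α/√t. Let g₁, …, g_T ∈ ℝ^d and define m₀ = 0, m_t = β_{1,t} m_{t−1} + (1 − β_{1,t}) g_t, v₀ = 0, v_t = β₂ v_{t−1} + (1 − β₂) g_t² (componentwise square). Then, with the convention that terms with v_{t,h} = 0 are 0: Σ_{t=1}^T ( α_t / (2(1−β_{1,t})) ) Σ_{h=1}^d m_{t,h}²/√(v_{t,h}) ≤ ( α √(1 + log T) / ( 2 (1−β₁)² √(1−β₂) (1−γ) ) ) Σ_{h=1}^d √( Σ_{t=1}^T g_{t,h}² ). -/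
/-!
Since `β_{1,t} ≤ γ √β₂`, convexity of the square and `v_t ≥ β₂ v_{t-1}`, `v_t ≥ (1 - β₂) g_t²`
give, by induction on `t`, `√(1 - β₂) m_t² ≤ S_t √v_t` in each coordinate, where
`S_t = γ S_{t-1} + |g_t|`.
For nonincreasing step sizes `a_t`, geometric summation bounds `(1 - γ) ∑ a_t S_t` by
`∑ a_t |g_t|`, and the Cauchy–Schwarz inequality bounds the latter by `√(∑ a_t²) √(∑ g_t²)`.
For `a_t = α / √t` the first factor is `α` times the square root of a harmonic number.
-/

open Finset

section OrderedRing

variable {R : Type*} [CommRing R]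

/-- The discounted sum `∑_{1 ≤ s ≤ t} γ ^ (t - s) * x s`. It starts from `0` at time `0`, so the
value `x 0` does not enter. -/
def discountedSum (γ : R) (x : ℕ → R) : ℕ → R
  | 0 => 0
  | t + 1 => γ * discountedSum γ x t + x (t + 1)

/-- `y` is, up to time `T`, the exponential moving average of `x` with decay rate `b t` at
step `t`, started from `y 0 = 0`. This describes both moments of the adaptive method:
`m` averages `g`, and `v` averages the squares of `g`. -/
structure IsExpMovingAvg (T : ℕ) (b x y : ℕ → R) : Prop where
  zero : y 0 = 0
  succ : ∀ t < T, y (t + 1) = b (t + 1) * y t + (1 - b (t + 1)) * x (t + 1)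

variable [LinearOrder R] [IsStrictOrderedRing R]

lemma discountedSum_nonneg {γ : R} (hγ : 0 ≤ γ) {x : ℕ → R} (hx : ∀ t, 0 ≤ x t) (t : ℕ) :
    0 ≤ discountedSum γ x t := by
  induction t with
  | zero => exact le_rfl
  | succ t ih => exact add_nonneg (mul_nonneg hγ ih) (hx _)

lemma sum_mul_discountedSum_add_le {γ : R} (hγ : 0 ≤ γ) {w x : ℕ → R} (hx : ∀ t, 0 ≤ x t)
    {T : ℕ} (hw : AntitoneOn w (Set.Icc 1 T)) :
    (1 - γ) * ∑ t ∈ Icc 1 T, w t * discountedSum γ x t + γ * (w T * discountedSum γ x T) ≤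
      ∑ t ∈ Icc 1 T, w t * x t := by
  induction T with
  | zero => simp [discountedSum]
  | succ n ih =>
    have ih := ih (hw.mono (Set.Icc_subset_Icc_right n.le_succ))
    have weight_le : w (n + 1) * discountedSum γ x n ≤ w n * discountedSum γ x n := by
      rcases n.eq_zero_or_pos with rfl | hn
      · simp [discountedSum]
      · exact mul_le_mul_of_nonneg_right (hw ⟨hn, n.le_succ⟩ ⟨n.succ_pos, le_rfl⟩ n.le_succ)
          (discountedSum_nonneg hγ hx n)
    rw [sum_Icc_succ_top n.succ_pos, sum_Icc_succ_top n.succ_pos]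
    have recursion : w (n + 1) * discountedSum γ x (n + 1) =
        γ * (w (n + 1) * discountedSum γ x n) + w (n + 1) * x (n + 1) := by
      rw [discountedSum]; ring
    linarith [mul_le_mul_of_nonneg_left weight_le hγ]

lemma one_sub_mul_sum_mul_discountedSum_le {γ : R} (hγ : 0 ≤ γ) {w x : ℕ → R}
    (hx : ∀ t, 0 ≤ x t) {T : ℕ} (hw : AntitoneOn w (Set.Icc 1 T))
    (hw0 : ∀ t ∈ Icc 1 T, 0 ≤ w t) :
    (1 - γ) * ∑ t ∈ Icc 1 T, w t * discountedSum γ x t ≤ ∑ t ∈ Icc 1 T, w t * x t := by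
  rcases T.eq_zero_or_pos with rfl | hT
  · simp
  · have boundary_nonneg : 0 ≤ γ * (w T * discountedSum γ x T) :=
      mul_nonneg hγ (mul_nonneg (hw0 T (right_mem_Icc.2 hT)) (discountedSum_nonneg hγ hx T))
    exact (le_add_of_nonneg_right boundary_nonneg).trans (sum_mul_discountedSum_add_le hγ hx hw)

namespace IsExpMovingAvg

variable {T t : ℕ} {b x y : ℕ → R}

lemma nonneg (h : IsExpMovingAvg T b x y) (hb : ∀ t ∈ Icc 1 T, b t ∈ Set.Icc 0 1)
    (hx : ∀ t ∈ Icc 1 T, 0 ≤ x t) (ht : t ≤ T) : 0 ≤ y t := by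
  induction t with
  | zero => exact h.zero.ge
  | succ t ih =>
    have mem : t + 1 ∈ Icc 1 T := mem_Icc.2 ⟨t.succ_pos, ht⟩
    rw [h.succ t ht]
    exact add_nonneg (mul_nonneg (hb _ mem).1 (ih (Nat.le_of_succ_le ht)))
      (mul_nonneg (sub_nonneg.2 (hb _ mem).2) (hx _ mem))

lemma sq_succ_le (h : IsExpMovingAvg T b x y) (ht : t < T) (hb : b (t + 1) ∈ Set.Icc 0 1) :
    y (t + 1) ^ 2 ≤ b (t + 1) * y t ^ 2 + (1 - b (t + 1)) * x (t + 1) ^ 2 := by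
  rw [h.succ t ht]
  exact (even_two.convexOn_pow (𝕜 := R)).2 (Set.mem_univ (y t)) (Set.mem_univ (x (t + 1)))
    hb.1 (sub_nonneg.2 hb.2) (add_sub_cancel _ _)

end IsExpMovingAvg

end OrderedRing

section AdaptiveMoments

variable {T t : ℕ} {b g m v : ℕ → ℝ} {β γ : ℝ}

lemma sqrt_mul_sqrt_le_sqrt_secondMoment_succ
    (hv : IsExpMovingAvg T (fun _ ↦ β) (fun t ↦ g t ^ 2) v)
    (hβ : β ∈ Set.Icc 0 1) (ht : t < T) : √β * √(v t) ≤ √(v (t + 1)) := by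
  rw [← Real.sqrt_mul hβ.1, hv.succ t ht]
  exact Real.sqrt_le_sqrt
    (le_add_of_nonneg_right (mul_nonneg (sub_nonneg.2 hβ.2) (sq_nonneg _)))

lemma sqrt_one_sub_mul_abs_le_sqrt_secondMoment_succ
    (hv : IsExpMovingAvg T (fun _ ↦ β) (fun t ↦ g t ^ 2) v)
    (hβ : β ∈ Set.Icc 0 1) (ht : t < T) : √(1 - β) * |g (t + 1)| ≤ √(v (t + 1)) := by
  have hv_nonneg : 0 ≤ v t := hv.nonneg (fun _ _ ↦ hβ) (fun _ _ ↦ sq_nonneg _) ht.le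
  rw [← Real.sqrt_sq_eq_abs, ← Real.sqrt_mul (sub_nonneg.2 hβ.2), hv.succ t ht]
  exact Real.sqrt_le_sqrt (le_add_of_nonneg_left (mul_nonneg hβ.1 hv_nonneg))

lemma sqrt_one_sub_mul_sq_firstMoment_le (hm : IsExpMovingAvg T b g m)
    (hv : IsExpMovingAvg T (fun _ ↦ β) (fun t ↦ g t ^ 2) v)
    (hb : ∀ t ∈ Icc 1 T, b t ∈ Set.Icc 0 1) (hbγ : ∀ t ∈ Icc 1 T, b t ≤ γ * √β)
    (hβ : β ∈ Set.Icc 0 1) (hγ : 0 ≤ γ) (ht : t ≤ T) :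
    √(1 - β) * m t ^ 2 ≤ discountedSum γ (fun t ↦ |g t|) t * √(v t) := by
  induction t with
  | zero => simp [hm.zero, discountedSum]
  | succ t ih =>
    have mem : t + 1 ∈ Icc 1 T := mem_Icc.2 ⟨t.succ_pos, ht⟩
    set S := discountedSum γ (fun t ↦ |g t|)
    have hS : 0 ≤ S t := discountedSum_nonneg hγ (fun _ ↦ abs_nonneg _) t
    have sq_le : m (t + 1) ^ 2 ≤ b (t + 1) * m t ^ 2 + |g (t + 1)| ^ 2 := by
      have h := hm.sq_succ_le ht (hb _ mem)
      rw [sq_abs]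
      linarith [mul_nonneg (hb _ mem).1 (sq_nonneg (g (t + 1)))]
    calc √(1 - β) * m (t + 1) ^ 2
        ≤ √(1 - β) * (b (t + 1) * m t ^ 2 + |g (t + 1)| ^ 2) := by gcongr
      _ = b (t + 1) * (√(1 - β) * m t ^ 2) + |g (t + 1)| * (√(1 - β) * |g (t + 1)|) := by ring
      _ ≤ γ * √β * (S t * √(v t)) + |g (t + 1)| * √(v (t + 1)) := by
        gcongr ?_ * ?_ + |g (t + 1)| * ?_
        · exact hbγ _ mem
        · exact ih (Nat.le_of_succ_le ht)
        · exact sqrt_one_sub_mul_abs_le_sqrt_secondMoment_succ hv hβ ht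
      _ = γ * S t * (√β * √(v t)) + |g (t + 1)| * √(v (t + 1)) := by ring
      _ ≤ γ * S t * √(v (t + 1)) + |g (t + 1)| * √(v (t + 1)) := by
        gcongr
        exact sqrt_mul_sqrt_le_sqrt_secondMoment_succ hv hβ ht
      _ = S (t + 1) * √(v (t + 1)) := (add_mul _ _ _).symm

lemma sq_firstMoment_div_sqrt_secondMoment_le (hm : IsExpMovingAvg T b g m)
    (hv : IsExpMovingAvg T (fun _ ↦ β) (fun t ↦ g t ^ 2) v)
    (hb : ∀ t ∈ Icc 1 T, b t ∈ Set.Icc 0 1) (hbγ : ∀ t ∈ Icc 1 T, b t ≤ γ * √β)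
    (hβ : β ∈ Set.Ico 0 1) (hγ : 0 ≤ γ) (ht : t ≤ T) :
    m t ^ 2 / √(v t) ≤ discountedSum γ (fun t ↦ |g t|) t / √(1 - β) := by
  have hS := discountedSum_nonneg hγ (fun t ↦ abs_nonneg (g t)) t
  have key := sqrt_one_sub_mul_sq_firstMoment_le hm hv hb hbγ (Set.Ico_subset_Icc_self hβ) hγ ht
  refine div_le_of_le_mul₀ (Real.sqrt_nonneg _) (by positivity) ?_
  rwa [div_mul_eq_mul_div, le_div_iff₀' (Real.sqrt_pos.2 (sub_pos.2 hβ.2))]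

lemma sum_mul_sq_firstMoment_div_sqrt_secondMoment_le (hm : IsExpMovingAvg T b g m)
    (hv : IsExpMovingAvg T (fun _ ↦ β) (fun t ↦ g t ^ 2) v)
    (hb : ∀ t ∈ Icc 1 T, b t ∈ Set.Icc 0 1) (hbγ : ∀ t ∈ Icc 1 T, b t ≤ γ * √β)
    (hβ : β ∈ Set.Ico 0 1) (hγ : γ ∈ Set.Ico 0 1) {a : ℕ → ℝ}
    (ha : AntitoneOn a (Set.Icc 1 T)) (ha0 : ∀ t ∈ Icc 1 T, 0 ≤ a t) :
    ∑ t ∈ Icc 1 T, a t * (m t ^ 2 / √(v t)) ≤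
      √(∑ t ∈ Icc 1 T, a t ^ 2) / (√(1 - β) * (1 - γ)) * √(∑ t ∈ Icc 1 T, g t ^ 2) := by
  set S := discountedSum γ (fun t ↦ |g t|)
  have discounted_le :
      ∑ t ∈ Icc 1 T, a t * S t ≤
        √(∑ t ∈ Icc 1 T, a t ^ 2) * √(∑ t ∈ Icc 1 T, g t ^ 2) / (1 - γ) := by
    rw [le_div_iff₀' (sub_pos.2 hγ.2)]
    calc (1 - γ) * ∑ t ∈ Icc 1 T, a t * S t
        ≤ ∑ t ∈ Icc 1 T, a t * |g t| :=
          one_sub_mul_sum_mul_discountedSum_le hγ.1 (fun _ ↦ abs_nonneg _) ha ha0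
      _ ≤ √(∑ t ∈ Icc 1 T, a t ^ 2) * √(∑ t ∈ Icc 1 T, g t ^ 2) := by
          simpa only [sq_abs] using Real.sum_mul_le_sqrt_mul_sqrt (Icc 1 T) a (fun t ↦ |g t|)
  calc ∑ t ∈ Icc 1 T, a t * (m t ^ 2 / √(v t))
      ≤ ∑ t ∈ Icc 1 T, a t * (S t / √(1 - β)) := by
        gcongr ∑ t ∈ _, a t * ?_ with t ht
        · exact ha0 t ht
        · exact sq_firstMoment_div_sqrt_secondMoment_le hm hv hb hbγ hβ hγ.1 (mem_Icc.1 ht).2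
    _ = (∑ t ∈ Icc 1 T, a t * S t) / √(1 - β) := by simp only [mul_div_assoc, sum_div]
    _ ≤ √(∑ t ∈ Icc 1 T, a t ^ 2) * √(∑ t ∈ Icc 1 T, g t ^ 2) / (1 - γ) / √(1 - β) := by gcongr
    _ = √(∑ t ∈ Icc 1 T, a t ^ 2) / (√(1 - β) * (1 - γ)) * √(∑ t ∈ Icc 1 T, g t ^ 2) := by
        rw [div_div, mul_comm (1 - γ), mul_div_right_comm]

end AdaptiveMoments

lemma antitoneOn_div_sqrt {α : ℝ} (hα : 0 ≤ α) :
    AntitoneOn (fun t : ℕ ↦ α / √t) (Set.Ici 1) := by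
  intro s hs t _ hst
  have hs_pos : 0 < √(s : ℝ) := Real.sqrt_pos.2 (Nat.cast_pos.2 hs)
  dsimp only
  gcongr

lemma sqrt_sum_sq_div_sqrt_le {α : ℝ} (hα : 0 ≤ α) (T : ℕ) :
    √(∑ t ∈ Icc 1 T, (α / √(t : ℝ)) ^ 2) ≤ α * √(1 + Real.log T) := by
  have sum_eq : ∑ t ∈ Icc 1 T, (α / √(t : ℝ)) ^ 2 = α ^ 2 * (harmonic T : ℝ) := by
    simp only [div_pow, Real.sq_sqrt (Nat.cast_nonneg _), div_eq_mul_inv (α ^ 2), ← mul_sum,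
      harmonic_eq_sum_Icc, Rat.cast_sum, Rat.cast_inv, Rat.cast_natCast]
  rw [sum_eq, Real.sqrt_mul (sq_nonneg α), Real.sqrt_sq hα]
  gcongr
  exact harmonic_le_one_add_log T

theorem stmt_17_general {ι : Type*} [Fintype ι] {T : ℕ} {a : ℕ → ℝ}
    (ha : AntitoneOn a (Set.Icc 1 T)) (ha0 : ∀ t ∈ Icc 1 T, 0 ≤ a t)
    {β₂ : ℝ} (hβ₂0 : 0 < β₂) (hβ₂1 : β₂ < 1)
    {β1 : ℕ → ℝ} {β₁ : ℝ} (hβ1 : ∀ t ∈ Icc 1 T, β1 t ∈ Set.Icc 0 β₁)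
    (hβ₁0 : 0 ≤ β₁) (hβ₁1 : β₁ < 1) {γ : ℝ} (hγ : γ = β₁ / √β₂) (hγ1 : γ < 1)
    {g m v : ℕ → ι → ℝ} (hm : ∀ h, IsExpMovingAvg T β1 (g · h) (m · h))
    (hv : ∀ h, IsExpMovingAvg T (fun _ ↦ β₂) (g · h ^ 2) (v · h)) :
    ∑ t ∈ Icc 1 T, a t / (2 * (1 - β1 t)) * ∑ h, m t h ^ 2 / √(v t h) ≤
      √(∑ t ∈ Icc 1 T, a t ^ 2) / (2 * (1 - β₁) * √(1 - β₂) * (1 - γ)) *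
        ∑ h, √(∑ t ∈ Icc 1 T, g t h ^ 2) := by
  have hγ0 : 0 ≤ γ := hγ ▸ by positivity
  have β₁_eq : γ * √β₂ = β₁ := by rw [hγ, div_mul_cancel₀ _ (Real.sqrt_pos.2 hβ₂0).ne']
  have : 0 < 1 - β₁ := sub_pos.2 hβ₁1
  calc ∑ t ∈ Icc 1 T, a t / (2 * (1 - β1 t)) * ∑ h, m t h ^ 2 / √(v t h)
      ≤ ∑ t ∈ Icc 1 T, a t / (2 * (1 - β₁)) * ∑ h, m t h ^ 2 / √(v t h) := by
        gcongr with t ht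
        · exact ha0 t ht
        · exact (hβ1 t ht).2
    _ = 1 / (2 * (1 - β₁)) * ∑ h, ∑ t ∈ Icc 1 T, a t * (m t h ^ 2 / √(v t h)) := by
        rw [sum_comm, mul_sum]
        exact sum_congr rfl fun t _ ↦ by rw [← mul_sum]; ring
    _ ≤ 1 / (2 * (1 - β₁)) * ∑ h, √(∑ t ∈ Icc 1 T, a t ^ 2) / (√(1 - β₂) * (1 - γ)) *
          √(∑ t ∈ Icc 1 T, g t h ^ 2) := by
        gcongr with h
        exact sum_mul_sq_firstMoment_div_sqrt_secondMoment_le (hm h) (hv h)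
          (fun t ht ↦ ⟨(hβ1 t ht).1, (hβ1 t ht).2.trans hβ₁1.le⟩)
          (fun t ht ↦ β₁_eq ▸ (hβ1 t ht).2) ⟨hβ₂0.le, hβ₂1⟩ ⟨hγ0, hγ1⟩ ha ha0
    _ = √(∑ t ∈ Icc 1 T, a t ^ 2) / (2 * (1 - β₁) * √(1 - β₂) * (1 - γ)) *
          ∑ h, √(∑ t ∈ Icc 1 T, g t h ^ 2) := by
        rw [← mul_sum, ← mul_assoc, div_mul_div_comm, one_mul, ← mul_assoc]

/-- deterministic core of Lemma D.5: accumulated error bound of adaptive moment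
methods.  With `m_t = β_{1,t} m_{t−1} + (1−β_{1,t}) g_t`, `v_t = β₂ v_{t−1} + (1−β₂) g_t²`,
`0 ≤ β_{1,t} ≤ β₁ < 1`, `γ = β₁/√β₂ < 1` and `α_t = α/√t`:
`Σ_t (α_t/(2(1−β_{1,t}))) Σ_h m_{t,h}²/√(v_{t,h})
  ≤ (α√(1+log T)/(2(1−β₁)²√(1−β₂)(1−γ))) Σ_h √(Σ_t g_{t,h}²)`.
(Division by zero in Lean is zero, matching the convention that terms with `v_{t,h} = 0`
vanish.) -/
theorem stmt_17 (d : ℕ) (T : ℕ) (hT : 1 ≤ T) (α : ℝ) (hα : 0 < α)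
    (β₂ : ℝ) (hβ₂0 : 0 < β₂) (hβ₂1 : β₂ < 1)
    (β1 : ℕ → ℝ) (β₁ : ℝ) (hβ1 : ∀ t, 1 ≤ t → t ≤ T → 0 ≤ β1 t ∧ β1 t ≤ β₁)
    (hβ₁0 : 0 ≤ β₁) (hβ₁1 : β₁ < 1)
    (γ : ℝ) (hγ : γ = β₁ / Real.sqrt β₂) (hγ1 : γ < 1)
    (g : ℕ → Fin d → ℝ)
    (m v : ℕ → Fin d → ℝ)
    (hm0 : ∀ h, m 0 h = 0) (hv0 : ∀ h, v 0 h = 0)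
    (hm : ∀ t, 1 ≤ t → t ≤ T → ∀ h, m t h = β1 t * m (t - 1) h + (1 - β1 t) * g t h)
    (hv : ∀ t, 1 ≤ t → t ≤ T → ∀ h, v t h = β₂ * v (t - 1) h + (1 - β₂) * (g t h) ^ 2) :
    ∑ t ∈ Finset.Icc 1 T, ((α / Real.sqrt t) / (2 * (1 - β1 t))) *
        ∑ h, (m t h) ^ 2 / Real.sqrt (v t h) ≤
      (α * Real.sqrt (1 + Real.log T) /
          (2 * (1 - β₁) ^ 2 * Real.sqrt (1 - β₂) * (1 - γ))) *
        ∑ h, Real.sqrt (∑ t ∈ Finset.Icc 1 T, (g t h) ^ 2) := by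
  have general := stmt_17_general ((antitoneOn_div_sqrt hα.le).mono Set.Icc_subset_Ici_self)
    (fun _ _ ↦ by positivity) hβ₂0 hβ₂1
    (fun t ht ↦ hβ1 t (mem_Icc.1 ht).1 (mem_Icc.1 ht).2) hβ₁0 hβ₁1 hγ hγ1
    (fun h ↦ ⟨hm0 h, fun t ht ↦ hm (t + 1) t.succ_pos ht h⟩)
    (fun h ↦ ⟨hv0 h, fun t ht ↦ hv (t + 1) t.succ_pos ht h⟩)
  have hβ₁_pos : 0 < 1 - β₁ := sub_pos.2 hβ₁1
  have : 0 < 1 - β₂ := sub_pos.2 hβ₂1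
  have : 0 < 1 - γ := sub_pos.2 hγ1
  refine general.trans ?_
  gcongr
  · exact sqrt_sum_sq_div_sqrt_le hα.le T
  · exact pow_le_of_le_one hβ₁_pos.le (sub_le_self 1 hβ₁0) two_ne_zero
end

section
/- Let T ≥ 1, G ≥ 0, 0 < β₂ < 1, 0 ≤ β₁ < 1 with γ = β₁/√β₂ < 1, and for each t let β_{1,t} ∈ [0, 1) with β_{1,t} ≤ β₁ and Σ_{t=1}^T β_{1,t}/(1−β_{1,t}) ≤ 1/(1−β₁). Let g₁, …, g_T ∈ ℝ^d with |g_{t,h}| ≤ G for all t, h, and define m₀ = 0, m_t = β_{1,t} m_{t−1} + (1−β_{1,t}) g_t; v₀ = 0, v_t = β₂ v_{t−1} + (1−β₂) g_t²; v̂₀ = 0, v̂_t = max(v̂_{t−1}, v_t) componentwise. Then, with the convention that terms with v̂_{t,h} = 0 are 0: Σ_{t=1}^T ( β_{1,t} / (2(1−β_{1,t})) ) Σ_{h=1}^d m_{t−1,h}² / √(v̂_{t,h}) ≤ G d / ( 2 (1−β₁)³ √(1−β₂) (1−γ) ). -/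
/-!
The first moment `m_s` averages `0, g_1, …, g_s` with convex weights, so it lies in every convex set
containing these points. For `s ≤ t` two intervals matter. One is `[-G, G]`. The other is centred at
`0` and has radius `√(v̂_t / (1 - β₂))`, because the maximum `v̂_t` dominates every `v_r` with
`r ≤ t`, and `v_r ≥ (1 - β₂) g_r²`. Multiplying the two bounds gives
`m_{t-1}² / √v̂_t ≤ G / √(1 - β₂)`. The maximum thus takes the place of a comparison of the decay
rates of `m` and `v`.
-/

open Finset

/-- `a` is, up to time `T`, the moving average of `x 1, x 2, …` started at `0`, where `β t` is the
weight that step `t` gives to the past. Both moments of the algorithm are of this form. -/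
structure IsMovingAverage {E : Type*} [AddCommMonoid E] [Module ℝ E]
    (T : ℕ) (β : ℕ → ℝ) (x a : ℕ → E) : Prop where
  zero : a 0 = 0
  succ : ∀ t < T, a (t + 1) = β (t + 1) • a t + (1 - β (t + 1)) • x (t + 1)

/-- `w` is, up to time `T`, the running maximum of `v 1, v 2, …` and of its own initial value `w 0`,
which is left arbitrary. It encodes the passage from `v` to `v̂`. -/
def IsRunningMax {α : Type*} [SemilatticeSup α] (T : ℕ) (v w : ℕ → α) : Prop :=
  ∀ t < T, w (t + 1) = w t ⊔ v (t + 1)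

namespace IsMovingAverage

variable {T t : ℕ} {β : ℕ → ℝ}

theorem mem_of_convex {E : Type*} [AddCommMonoid E] [Module ℝ E] {x a : ℕ → E} {S : Set E}
    (ha : IsMovingAverage T β x a) (hβ : ∀ s ∈ Set.Icc 1 T, β s ∈ Set.Icc 0 1)
    (hS : Convex ℝ S) (h0 : 0 ∈ S) (ht : t ≤ T) (hx : ∀ s ∈ Set.Icc 1 t, x s ∈ S) :
    a t ∈ S := by
  induction t with
  | zero => rwa [ha.zero]
  | succ t ih =>
    obtain ⟨hβ0, hβ1⟩ := hβ (t + 1) ⟨by lia, ht⟩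
    have hat : a t ∈ S := ih (by lia) fun s hs => hx s ⟨hs.1, hs.2.trans t.le_succ⟩
    rw [ha.succ t ht]
    exact hS hat (hx (t + 1) ⟨by lia, le_rfl⟩) hβ0 (sub_nonneg.2 hβ1) (by ring)

theorem norm_le {E : Type*} [SeminormedAddCommGroup E] [NormedSpace ℝ E] {x a : ℕ → E} {C : ℝ}
    (ha : IsMovingAverage T β x a) (hβ : ∀ s ∈ Set.Icc 1 T, β s ∈ Set.Icc 0 1)
    (hC : 0 ≤ C) (ht : t ≤ T) (hx : ∀ s ∈ Set.Icc 1 t, ‖x s‖ ≤ C) : ‖a t‖ ≤ C := by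
  simpa using ha.mem_of_convex hβ (convex_closedBall 0 C) (by simpa using hC) ht (by simpa using hx)

variable {x a : ℕ → ℝ}

theorem nonneg (ha : IsMovingAverage T β x a) (hβ : ∀ s ∈ Set.Icc 1 T, β s ∈ Set.Icc 0 1)
    (hx : ∀ s ∈ Set.Icc 1 T, 0 ≤ x s) (ht : t ≤ T) : 0 ≤ a t :=
  ha.mem_of_convex hβ (convex_Ici 0) Set.self_mem_Ici ht fun s hs => hx s ⟨hs.1, hs.2.trans ht⟩

theorem one_sub_mul_le (ha : IsMovingAverage T β x a) (hβ : ∀ s ∈ Set.Icc 1 T, β s ∈ Set.Icc 0 1)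
    (hx : ∀ s ∈ Set.Icc 1 T, 0 ≤ x s) (ht : t ∈ Set.Icc 1 T) : (1 - β t) * x t ≤ a t := by
  obtain ⟨t, rfl⟩ := Nat.exists_eq_add_of_le' ht.1
  rw [ha.succ t ht.2, smul_eq_mul, smul_eq_mul]
  exact le_add_of_nonneg_left (mul_nonneg (hβ _ ht).1 (ha.nonneg hβ hx (Nat.le_of_lt ht.2)))

end IsMovingAverage

theorem IsRunningMax.le {α : Type*} [SemilatticeSup α] {T s t : ℕ} {v w : ℕ → α}
    (hw : IsRunningMax T v w) (hs : 1 ≤ s) (hst : s ≤ t) (ht : t ≤ T) : v s ≤ w t := by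
  induction t, hst using Nat.le_induction with
  | base =>
    obtain ⟨s, rfl⟩ := Nat.exists_eq_add_of_le' hs
    exact (hw s ht).symm ▸ le_sup_right
  | succ t _ ih => exact (hw t ht).symm ▸ (ih (by lia)).trans le_sup_left

section AMSGrad

variable {T s t : ℕ} {G β₂ : ℝ} {β₁ g m v w : ℕ → ℝ}

theorem abs_le_sqrt_runningMax_div (hβ₂0 : 0 ≤ β₂) (hβ₂1 : β₂ < 1)
    (hv : IsMovingAverage T (fun _ => β₂) (fun t => g t ^ 2) v) (hw : IsRunningMax T v w)
    (hs : 1 ≤ s) (hst : s ≤ t) (ht : t ≤ T) : |g s| ≤ √(w t / (1 - β₂)) := by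
  refine Real.abs_le_sqrt ((le_div_iff₀' (sub_pos.2 hβ₂1)).2 ?_)
  calc (1 - β₂) * g s ^ 2 ≤ v s :=
        hv.one_sub_mul_le (fun _ _ => ⟨hβ₂0, hβ₂1.le⟩) (fun _ _ => sq_nonneg _) ⟨hs, hst.trans ht⟩
    _ ≤ w t := hw.le hs hst ht

theorem abs_movingAverage_le_sqrt_runningMax_div (hβ₂0 : 0 ≤ β₂) (hβ₂1 : β₂ < 1)
    (hβ₁ : ∀ t ∈ Set.Icc 1 T, β₁ t ∈ Set.Icc 0 1) (hm : IsMovingAverage T β₁ g m)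
    (hv : IsMovingAverage T (fun _ => β₂) (fun t => g t ^ 2) v) (hw : IsRunningMax T v w)
    (hst : s ≤ t) (ht : t ≤ T) : |m s| ≤ √(w t / (1 - β₂)) :=
  hm.norm_le hβ₁ (Real.sqrt_nonneg _) (hst.trans ht) fun _ hr =>
    abs_le_sqrt_runningMax_div hβ₂0 hβ₂1 hv hw hr.1 (hr.2.trans hst) ht

theorem sq_movingAverage_div_sqrt_runningMax_le (hG : 0 ≤ G) (hβ₂0 : 0 ≤ β₂) (hβ₂1 : β₂ < 1)
    (hβ₁ : ∀ t ∈ Set.Icc 1 T, β₁ t ∈ Set.Icc 0 1) (hg : ∀ t ∈ Set.Icc 1 T, |g t| ≤ G)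
    (hm : IsMovingAverage T β₁ g m)
    (hv : IsMovingAverage T (fun _ => β₂) (fun t => g t ^ 2) v) (hw : IsRunningMax T v w)
    (hst : s ≤ t) (ht : t ≤ T) : m s ^ 2 / √(w t) ≤ G / √(1 - β₂) := by
  have hmG : |m s| ≤ G :=
    hm.norm_le hβ₁ hG (hst.trans ht) fun r hr => hg r ⟨hr.1, hr.2.trans (hst.trans ht)⟩
  have hmw := abs_movingAverage_le_sqrt_runningMax_div hβ₂0 hβ₂1 hβ₁ hm hv hw hst ht
  refine div_le_of_le_mul₀ (Real.sqrt_nonneg _) (by positivity) ?_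
  calc m s ^ 2 = |m s| * |m s| := by rw [← sq, sq_abs]
    _ ≤ G * √(w t / (1 - β₂)) := mul_le_mul hmG hmw (abs_nonneg _) hG
    _ = G / √(1 - β₂) * √(w t) := by rw [Real.sqrt_div' _ (sub_nonneg.2 hβ₂1.le)]; ring

end AMSGrad

theorem stmt_19_general {ι : Type*} [Fintype ι] {T : ℕ} {G β₂ : ℝ} {β₁ : ℕ → ℝ}
    {g m v w : ℕ → ι → ℝ} (hβ₂0 : 0 ≤ β₂) (hβ₂1 : β₂ < 1)
    (hβ₁ : ∀ t ∈ Set.Icc 1 T, 0 ≤ β₁ t ∧ β₁ t < 1)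
    (hg : ∀ t ∈ Set.Icc 1 T, ∀ h, |g t h| ≤ G)
    (hm : ∀ h, IsMovingAverage T β₁ (g · h) (m · h))
    (hv : ∀ h, IsMovingAverage T (fun _ => β₂) (g · h ^ 2) (v · h))
    (hw : ∀ h, IsRunningMax T (v · h) (w · h)) :
    ∑ t ∈ Icc 1 T, β₁ t / (2 * (1 - β₁ t)) * ∑ h, m (t - 1) h ^ 2 / √(w t h) ≤
      G * Fintype.card ι / (2 * √(1 - β₂)) * ∑ t ∈ Icc 1 T, β₁ t / (1 - β₁ t) := by
  rw [mul_sum]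
  refine sum_le_sum fun t ht => ?_
  have ht' := mem_Icc.1 ht
  obtain ⟨hβ0, hβ1⟩ := hβ₁ t ht'
  have hcoord (h : ι) : m (t - 1) h ^ 2 / √(w t h) ≤ G / √(1 - β₂) :=
    sq_movingAverage_div_sqrt_runningMax_le ((abs_nonneg _).trans (hg t ht' h)) hβ₂0 hβ₂1
      (fun s hs => ⟨(hβ₁ s hs).1, (hβ₁ s hs).2.le⟩) (fun s hs => hg s hs h)
      (hm h) (hv h) (hw h) (Nat.sub_le t 1) ht'.2
  calc β₁ t / (2 * (1 - β₁ t)) * ∑ h, m (t - 1) h ^ 2 / √(w t h)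
      ≤ β₁ t / (2 * (1 - β₁ t)) * ∑ _h : ι, G / √(1 - β₂) :=
        mul_le_mul_of_nonneg_left (sum_le_sum fun h _ => hcoord h)
          (div_nonneg hβ0 (by linarith))
    _ = G * Fintype.card ι / (2 * √(1 - β₂)) * (β₁ t / (1 - β₁ t)) := by
        have hβne : 1 - β₁ t ≠ 0 := (sub_pos.2 hβ1).ne'
        rw [sum_const, card_univ, nsmul_eq_mul]
        field_simp

theorem one_div_le_one_div_pow_mul {x y : ℝ} {n : ℕ} (hx0 : 0 < x) (hx1 : x ≤ 1) (hy0 : 0 < y)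
    (hy1 : y ≤ 1) (hn : n ≠ 0) : 1 / x ≤ 1 / (x ^ n * y) :=
  one_div_le_one_div_of_le (by positivity)
    ((mul_le_of_le_one_right (by positivity) hy1).trans (pow_le_of_le_one hx0.le hx1 hn))

/-- Lemma D.3 of the paper: bound on the first moving-average term of the
DASGrad/AMSGrad regret.  With `m_t = β_{1,t} m_{t−1} + (1−β_{1,t}) g_t`,
`v_t = β₂ v_{t−1} + (1−β₂) g_t²`, `v̂_t = max(v̂_{t−1}, v_t)` componentwise, `|g_{t,h}| ≤ G`,
`β_{1,t} ≤ β₁`, `γ = β₁/√β₂ < 1`, and the summability condition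
`Σ_t β_{1,t}/(1−β_{1,t}) ≤ 1/(1−β₁)`:
`Σ_t (β_{1,t}/(2(1−β_{1,t}))) Σ_h m_{t−1,h}²/√(v̂_{t,h}) ≤ G d/(2(1−β₁)³√(1−β₂)(1−γ))`.
(Division by zero in Lean is zero, matching the convention that terms with `v̂_{t,h} = 0`
vanish.) -/
theorem stmt_19 (d : ℕ) (T : ℕ) (hT : 1 ≤ T) (G : ℝ) (hG : 0 ≤ G)
    (β₂ : ℝ) (hβ₂0 : 0 < β₂) (hβ₂1 : β₂ < 1)
    (β₁ : ℝ) (hβ₁0 : 0 ≤ β₁) (hβ₁1 : β₁ < 1)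
    (γ : ℝ) (hγ : γ = β₁ / Real.sqrt β₂) (hγ1 : γ < 1)
    (β1 : ℕ → ℝ) (hβ1 : ∀ t, 1 ≤ t → t ≤ T → 0 ≤ β1 t ∧ β1 t < 1 ∧ β1 t ≤ β₁)
    (hβ1sum : ∑ t ∈ Finset.Icc 1 T, β1 t / (1 - β1 t) ≤ 1 / (1 - β₁))
    (g : ℕ → Fin d → ℝ) (hgb : ∀ t, 1 ≤ t → t ≤ T → ∀ h, |g t h| ≤ G)
    (m v vhat : ℕ → Fin d → ℝ)
    (hm0 : ∀ h, m 0 h = 0) (hv0 : ∀ h, v 0 h = 0) (hvhat0 : ∀ h, vhat 0 h = 0)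
    (hm : ∀ t, 1 ≤ t → t ≤ T → ∀ h, m t h = β1 t * m (t - 1) h + (1 - β1 t) * g t h)
    (hv : ∀ t, 1 ≤ t → t ≤ T → ∀ h, v t h = β₂ * v (t - 1) h + (1 - β₂) * (g t h) ^ 2)
    (hvhat : ∀ t, 1 ≤ t → t ≤ T → ∀ h, vhat t h = max (vhat (t - 1) h) (v t h)) :
    ∑ t ∈ Finset.Icc 1 T, (β1 t / (2 * (1 - β1 t))) *
        ∑ h, (m (t - 1) h) ^ 2 / Real.sqrt (vhat t h) ≤
      G * (d : ℝ) / (2 * (1 - β₁) ^ 3 * Real.sqrt (1 - β₂) * (1 - γ)) := by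
  have hγ0 : 0 ≤ γ := hγ ▸ div_nonneg hβ₁0 (Real.sqrt_nonneg _)
  have hsum : ∑ t ∈ Finset.Icc 1 T, β1 t / (1 - β1 t) ≤ 1 / ((1 - β₁) ^ 3 * (1 - γ)) :=
    hβ1sum.trans (one_div_le_one_div_pow_mul (by linarith) (by linarith) (by linarith)
      (by linarith) three_ne_zero)
  calc _ ≤ G * Fintype.card (Fin d) / (2 * √(1 - β₂)) * ∑ t ∈ Finset.Icc 1 T, β1 t / (1 - β1 t) :=
        stmt_19_general hβ₂0.le hβ₂1 (fun t ht => ⟨(hβ1 t ht.1 ht.2).1, (hβ1 t ht.1 ht.2).2.1⟩)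
          (fun t ht => hgb t ht.1 ht.2)
          (fun h => ⟨hm0 h, fun t ht => hm (t + 1) t.succ_pos ht h⟩)
          (fun h => ⟨hv0 h, fun t ht => hv (t + 1) t.succ_pos ht h⟩)
          (fun h t ht => hvhat (t + 1) t.succ_pos ht h)
    _ ≤ G * Fintype.card (Fin d) / (2 * √(1 - β₂)) * (1 / ((1 - β₁) ^ 3 * (1 - γ))) := by gcongr
    _ = _ := by rw [Fintype.card_fin, div_mul_div_comm, mul_one]; congr 1; ring
end
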